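/- arXiv:0904.1691 — 3 statements merged into one kernel-verified Lean document; each statement's English description precedes it below -/
import Mathlib

section
/- Let 1 ≤ p, q, r, s ≤ ∞. Suppose there exists a constant C > 0 such that ‖L_σ f‖_{W(L^r,L^s)} ≤ C · ‖σ‖_{M^{p,q}} · ‖f‖_{W(L^r,L^s)} for all Schwartz σ on ℝ^{2d} and all Schwartz f on ℝ^d. Then there exists a constant C' > 0 such that ‖L_σ f‖_{W(L^{r'},L^{s'})} ≤ C' · ‖σ‖_{M^{p,q}} · ‖f‖_{W(L^{r'},L^{s'})} for all Schwartz σ on ℝ^{2d} and all Schwartz f on ℝ^d, where r', s' are the conjugate exponents of r, s (this holds also when r = ∞ or s = ∞). -/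
open MeasureTheory SchwartzMap Complex ENNReal NNReal

noncomputable section

/-- Mixed `L^p`-type norm of an `ℝ≥0∞`-valued function, with the usual
`essSup` modification when `p = ∞`. -/
def lqNorm {α : Type*} [MeasurableSpace α] (μ : Measure α) (p : ℝ≥0∞)
    (f : α → ℝ≥0∞) : ℝ≥0∞ :=
  if p = ∞ then essSup f μ else (∫⁻ a, f a ^ p.toReal ∂μ) ^ (1 / p.toReal)

/-- Conjugate exponent in `ℝ≥0∞` : `1/p + 1/p' = 1`, with `1' = ∞`, `∞' = 1`. -/
def dualExp (p : ℝ≥0∞) : ℝ≥0∞ :=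
  if p = 1 then ∞ else if p = ∞ then 1 else ENNReal.ofReal (p.toReal / (p.toReal - 1))

/-- `1/p` as a real number, with the convention `1/∞ = 0`. -/
def invR (p : ℝ≥0∞) : ℝ := (p⁻¹).toReal

/-- The Gaussian window `G(t) = exp(-π |t|²)` (as a complex-valued function). -/
def gaussWin {ι : Type*} [Fintype ι] (t : EuclideanSpace ℝ ι) : ℂ :=
  Complex.exp (-(Real.pi * ‖t‖ ^ 2))

/-- Short-time Fourier transform with Gaussian window:
`V_G F (x, ω) = ∫ F t * conj (G (t - x)) * exp (-2πi ω⬝t) dt`. -/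
def STFT {ι : Type*} [Fintype ι] (F : EuclideanSpace ℝ ι → ℂ)
    (x ω : EuclideanSpace ℝ ι) : ℂ :=
  ∫ t, F t * (starRingEnd ℂ) (gaussWin (t - x)) *
    Complex.exp (Complex.I * (-(2 * Real.pi * (inner ℝ ω t : ℝ))))

/-- Modulation space norm `M^{p,q}`. -/
def modNorm {ι : Type*} [Fintype ι] (p q : ℝ≥0∞)
    (F : EuclideanSpace ℝ ι → ℂ) : ℝ≥0∞ :=
  lqNorm volume q fun ω => lqNorm volume p fun x => (‖STFT F x ω‖₊ : ℝ≥0∞)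

/-- Wiener amalgam norm `W(𝓕 L^p, L^q)` (local component Fourier–Lebesgue). -/
def wFLNorm {ι : Type*} [Fintype ι] (p q : ℝ≥0∞)
    (F : EuclideanSpace ℝ ι → ℂ) : ℝ≥0∞ :=
  lqNorm volume q fun x => lqNorm volume p fun ω => (‖STFT F x ω‖₊ : ℝ≥0∞)

/-- The unit cube `[0,1)^d`. -/
def unitCube (d : ℕ) : Set (EuclideanSpace ℝ (Fin d)) :=
  {x | ∀ i, x i ∈ Set.Ico (0 : ℝ) 1}

/-- Wiener amalgam norm
`‖f‖_{W(L^r,L^s)} = ( Σ_{n ∈ ℤ^d} ( ∫_{[0,1)^d} |f(x+n)|^r dx )^{s/r} )^{1/s}`. -/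
def wNorm (d : ℕ) (r s : ℝ≥0∞) (f : EuclideanSpace ℝ (Fin d) → ℂ) : ℝ≥0∞ :=
  lqNorm (Measure.count : Measure (Fin d → ℤ)) s fun n =>
    lqNorm (volume.restrict (unitCube d)) r fun x =>
      (‖f (x + show EuclideanSpace ℝ (Fin d) from WithLp.toLp 2 fun i => (n i : ℝ))‖₊ : ℝ≥0∞)

/-- Pairing `(x, ω) ∈ ℝ^d × ℝ^d ↦ ℝ^{2d}`. -/
def pairE {d : ℕ} (x ω : EuclideanSpace ℝ (Fin d)) :
    EuclideanSpace ℝ (Fin d ⊕ Fin d) :=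
  WithLp.toLp 2 fun i => Sum.elim (fun j => x j) (fun j => ω j) i

/-- First (space) component of a point of `ℝ^{2d}`. -/
def xpart {d : ℕ} (z : EuclideanSpace ℝ (Fin d ⊕ Fin d)) :
    EuclideanSpace ℝ (Fin d) := WithLp.toLp 2 fun i => z (Sum.inl i)

/-- Second (frequency) component of a point of `ℝ^{2d}`. -/
def wpart {d : ℕ} (z : EuclideanSpace ℝ (Fin d ⊕ Fin d)) :
    EuclideanSpace ℝ (Fin d) := WithLp.toLp 2 fun i => z (Sum.inr i)

/-- Fourier transform `f̂(ω) = ∫ f t e^{-2πi t⬝ω} dt`. -/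
def fTrans {ι : Type*} [Fintype ι] (f : EuclideanSpace ℝ ι → ℂ)
    (ω : EuclideanSpace ℝ ι) : ℂ :=
  ∫ t, f t * Complex.exp (Complex.I * (-(2 * Real.pi * (inner ℝ t ω : ℝ))))

/-- Kohn–Nirenberg operator `a(x,D) f (x) = ∫ a(x,ω) f̂(ω) e^{2πi x⬝ω} dω`. -/
def KNop {d : ℕ} (a : EuclideanSpace ℝ (Fin d ⊕ Fin d) → ℂ)
    (f : EuclideanSpace ℝ (Fin d) → ℂ) (x : EuclideanSpace ℝ (Fin d)) : ℂ :=
  ∫ ω, a (pairE x ω) * fTrans f ω *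
    Complex.exp (Complex.I * (2 * Real.pi * (inner ℝ x ω : ℝ)))

/-- Weyl operator `L_σ f (x) = ∫∫ e^{2πi (x-y)⬝ω} σ((x+y)/2, ω) f(y) dy dω`. -/
def weylOp {d : ℕ} (σ : EuclideanSpace ℝ (Fin d ⊕ Fin d) → ℂ)
    (f : EuclideanSpace ℝ (Fin d) → ℂ) (x : EuclideanSpace ℝ (Fin d)) : ℂ :=
  ∫ y, ∫ ω, Complex.exp (Complex.I * (2 * Real.pi * (inner ℝ (x - y) ω : ℝ))) *
    σ (pairE ((2 : ℝ)⁻¹ • (x + y)) ω) * f y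

/-- Cross-Wigner distribution
`W(g,f)(x,ω) = ∫ g(x+t/2) conj(f(x−t/2)) e^{−2πi ω⬝t} dt`. -/
def wigner {d : ℕ} (g f : EuclideanSpace ℝ (Fin d) → ℂ)
    (z : EuclideanSpace ℝ (Fin d ⊕ Fin d)) : ℂ :=
  ∫ t, g (xpart z + (2 : ℝ)⁻¹ • t) * (starRingEnd ℂ) (f (xpart z - (2 : ℝ)⁻¹ • t)) *
    Complex.exp (Complex.I * (-(2 * Real.pi * (inner ℝ (wpart z) t : ℝ))))

end

theorem lqNorm_mono_ae {α : Type*} [MeasurableSpace α] {μ : Measure α} {p : ℝ≥0∞}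
    {f g : α → ℝ≥0∞} (h : ∀ᵐ x ∂μ, f x ≤ g x) : lqNorm μ p f ≤ lqNorm μ p g := by
  unfold lqNorm
  split_ifs with hp
  · exact essSup_mono_ae h
  · apply ENNReal.rpow_le_rpow _ (by positivity)
    apply lintegral_mono_ae
    filter_upwards [h] with x hx
    exact ENNReal.rpow_le_rpow hx (by positivity)

theorem lqNorm_mono {α : Type*} [MeasurableSpace α] {μ : Measure α} {p : ℝ≥0∞}
    {f g : α → ℝ≥0∞} (h : ∀ x, f x ≤ g x) : lqNorm μ p f ≤ lqNorm μ p g :=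
  lqNorm_mono_ae (Filter.Eventually.of_forall h)

theorem lqNorm_const_mul {α : Type*} [MeasurableSpace α] {μ : Measure α} {p : ℝ≥0∞}
    (hp1 : 1 ≤ p) {f : α → ℝ≥0∞} {c : ℝ≥0∞} (hc : c ≠ ∞) :
    lqNorm μ p (fun x => c * f x) = c * lqNorm μ p f := by
  unfold lqNorm
  split_ifs with hp
  · exact ENNReal.essSup_const_mul
  · have h0 : 0 < p.toReal := ENNReal.toReal_pos (by positivity) hp
    simp_rw [ENNReal.mul_rpow_of_nonneg _ _ h0.le]
    rw [lintegral_const_mul' _ _ (ENNReal.rpow_ne_top_of_nonneg h0.le hc),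
      ENNReal.mul_rpow_of_nonneg _ _ (by positivity), ← ENNReal.rpow_mul]
    rw [mul_one_div_cancel h0.ne', ENNReal.rpow_one]

theorem lqNorm_comp_equiv {α β : Type*} [MeasurableSpace α] [MeasurableSpace β]
    {μ : Measure α} {ν : Measure β} (e : α ≃ᵐ β) (he : MeasurePreserving e μ ν) (p : ℝ≥0∞)
    (f : β → ℝ≥0∞) : lqNorm μ p (fun x => f (e x)) = lqNorm ν p f := by
  unfold lqNorm
  split_ifs with hp
  · rw [← he.map_eq, e.measurableEmbedding.essSup_map_measure]; rfl
  · rw [← he.map_eq, lintegral_map_equiv]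

theorem dualExp_spec {p : ℝ≥0∞} (hp : 1 ≤ p) (h1 : p ≠ 1) (ht : p ≠ ∞) :
    dualExp p ≠ ∞ ∧ p.toReal.HolderConjugate (dualExp p).toReal := by
  have h : 1 < p.toReal := by
    rw [← ENNReal.toReal_one]
    exact (ENNReal.toReal_lt_toReal (by simp) ht).2 (lt_of_le_of_ne hp (Ne.symm h1))
  simp only [dualExp, h1, ht, if_false]
  refine ⟨ENNReal.ofReal_ne_top, ?_⟩
  rw [ENNReal.toReal_ofReal (div_nonneg (by linarith) (by linarith))]
  exact Real.HolderConjugate.conjExponent h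

theorem one_le_dualExp {p : ℝ≥0∞} (hp : 1 ≤ p) : 1 ≤ dualExp p := by
  by_cases h1 : p = 1
  · simp [dualExp, h1]
  by_cases ht : p = ∞
  · simp [dualExp, ht]
  obtain ⟨ha, hb⟩ := dualExp_spec hp h1 ht
  rw [← ENNReal.ofReal_toReal ha, ENNReal.one_le_ofReal]
  exact hb.symm.lt.le

theorem lqNorm_holder {α : Type*} [MeasurableSpace α] {μ : Measure α} {p : ℝ≥0∞}
    (hp : 1 ≤ p) {f g : α → ℝ≥0∞} (hf : AEMeasurable f μ) (hg : AEMeasurable g μ) :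
    ∫⁻ x, f x * g x ∂μ ≤ lqNorm μ (dualExp p) f * lqNorm μ p g := by
  by_cases h1 : p = 1
  · subst h1
    simp only [lqNorm, dualExp, if_true, ENNReal.one_ne_top, if_false, ENNReal.toReal_one,
      ENNReal.rpow_one, div_one]
    rw [← lintegral_const_mul'' _ hg]
    apply lintegral_mono_ae
    filter_upwards [ENNReal.ae_le_essSup f] with x hx
    gcongr
  by_cases ht : p = ∞
  · subst ht
    simp only [lqNorm, dualExp, if_true, ENNReal.one_ne_top, if_false, ENNReal.toReal_one,
      ENNReal.rpow_one, div_one, ENNReal.top_ne_one]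
    rw [← lintegral_mul_const'' _ hf]
    apply lintegral_mono_ae
    filter_upwards [ENNReal.ae_le_essSup g] with x hx
    gcongr
  obtain ⟨ha, hb⟩ := dualExp_spec hp h1 ht
  simp only [lqNorm, ha, ht, if_false]
  exact ENNReal.lintegral_mul_le_Lp_mul_Lq μ hb.symm hf hg

theorem lqNorm_converse {α : Type*} [MeasurableSpace α] {μ : Measure α} [IsFiniteMeasure μ]
    {p : ℝ≥0∞} (hp : 1 ≤ p) {h : α → ℝ≥0∞} (hm : Measurable h) {B : ℝ≥0∞} (hB : B ≠ ∞)
    (hhB : ∀ x, h x ≤ B) :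
    ∃ u : α → ℝ≥0∞, Measurable u ∧ (∃ D : ℝ≥0∞, D ≠ ∞ ∧ ∀ x, u x ≤ D) ∧ lqNorm μ p u ≤ 1 ∧
      lqNorm μ (dualExp p) h ≤ 2 * ∫⁻ x, h x * u x ∂μ := by
  by_cases hz : lqNorm μ (dualExp p) h = 0
  · refine ⟨fun _ => 0, measurable_const, ⟨0, by simp, by simp⟩, ?_, by simp [hz]⟩
    have := lqNorm_const_mul (μ := μ) hp (f := fun _ => 0) (c := 0) (by simp)
    simp only [zero_mul] at this
    simp [this]
  by_cases h1 : p = 1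
  · subst h1
    simp only [dualExp, if_true] at hz ⊢
    simp only [lqNorm, if_true, ENNReal.one_ne_top, if_false, ENNReal.toReal_one,
      ENNReal.rpow_one, div_one] at hz ⊢
    set E := essSup h μ with hE
    have hEB : E ≤ B := essSup_le_of_ae_le B (Filter.Eventually.of_forall hhB)
    have hEt : E ≠ ∞ := ne_top_of_le_ne_top hB hEB
    have hlt : E / 2 < E := ENNReal.half_lt_self hz hEt
    set S := {x | E / 2 < h x} with hS
    have hSm : MeasurableSet S := measurableSet_lt measurable_const hm
    have hS0 : μ S ≠ 0 := by
      intro h0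
      have : E ≤ E / 2 := by
        refine essSup_le_of_ae_le _ ?_
        rw [Filter.EventuallyLE, ae_iff]
        simpa [hS] using h0
      exact absurd this (not_le.2 hlt)
    refine ⟨S.indicator (fun _ => (μ S)⁻¹), measurable_const.indicator hSm,
      ⟨(μ S)⁻¹, by simp [hS0], fun x => Set.indicator_le_self' (by simp) x⟩, ?_, ?_⟩
    · rw [lintegral_indicator_const hSm, ENNReal.inv_mul_cancel hS0 (measure_ne_top _ _)]
    · have : E / 2 ≤ ∫⁻ x, h x * S.indicator (fun _ => (μ S)⁻¹) x ∂μ := by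
        calc E / 2 = ∫⁻ x, S.indicator (fun _ => E / 2 * (μ S)⁻¹) x ∂μ := by
              rw [lintegral_indicator_const hSm, mul_assoc,
                ENNReal.inv_mul_cancel hS0 (measure_ne_top _ _), mul_one]
          _ ≤ _ := by
              apply lintegral_mono
              intro x
              by_cases hx : x ∈ S
              · simp only [Set.indicator_of_mem hx]
                gcongr
                exact le_of_lt hx
              · simp [Set.indicator_of_notMem hx]
      calc E = 2 * (E / 2) := (ENNReal.mul_div_cancel (by simp) (by simp)).symm
        _ ≤ _ := by gcongr
  by_cases ht : p = ∞
  · subst ht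
    refine ⟨fun _ => 1, measurable_const, ⟨1, by simp, by simp⟩, ?_, ?_⟩
    · simp only [lqNorm, if_true]
      exact essSup_le_of_ae_le 1 (Filter.Eventually.of_forall (by simp))
    · simp only [lqNorm, dualExp, if_true, ENNReal.one_ne_top, if_false, ENNReal.toReal_one,
      ENNReal.rpow_one, div_one, ENNReal.top_ne_one, mul_one]
      exact le_mul_of_one_le_left (by simp) (by norm_num)
  obtain ⟨ha, hb⟩ := dualExp_spec hp h1 ht
  simp only [lqNorm, ha, ht, if_false] at hz ⊢
  set a := p.toReal with hadef
  set b := (dualExp p).toReal with hbdef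
  set I := ∫⁻ x, h x ^ b ∂μ with hI
  have hb1 : 1 < b := hb.symm.lt
  have ha1 : 1 < a := hb.lt
  have hI0 : I ≠ 0 := by
    intro h0
    apply hz
    rw [h0, ENNReal.zero_rpow_of_pos (by positivity)]
  have hIt : I ≠ ∞ := by
    have : I ≤ ∫⁻ x, B ^ b ∂μ :=
      lintegral_mono fun x => ENNReal.rpow_le_rpow (hhB x) (by positivity)
    refine ne_top_of_le_ne_top ?_ this
    rw [lintegral_const]
    exact ENNReal.mul_ne_top (ENNReal.rpow_ne_top_of_nonneg (by positivity) hB)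
      (measure_ne_top _ _)
  have hab : (b - 1) * a = b := by
    have := hb.mul_eq_add
    nlinarith
  refine ⟨fun x => I ^ (-(1 / a)) * h x ^ (b - 1), by fun_prop,
    ⟨I ^ (-(1 / a)) * B ^ (b - 1), ?_, ?_⟩, ?_, ?_⟩
  · refine ENNReal.mul_ne_top ?_ (ENNReal.rpow_ne_top_of_nonneg (by linarith) hB)
    exact ENNReal.rpow_ne_top_of_ne_zero hI0 hIt
  · intro x
    exact mul_le_mul_right (ENNReal.rpow_le_rpow (hhB x) (by linarith)) _
  · have : ∀ x, (I ^ (-(1 / a)) * h x ^ (b - 1)) ^ a = I⁻¹ * h x ^ b := by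
      intro x
      rw [ENNReal.mul_rpow_of_nonneg _ _ (by positivity), ← ENNReal.rpow_mul, ← ENNReal.rpow_mul,
        hab]
      congr 1
      rw [neg_mul, one_div_mul_cancel (by positivity), ENNReal.rpow_neg_one]
    simp_rw [this]
    rw [lintegral_const_mul' _ _ (by simp [hI0]), ← hI, ENNReal.inv_mul_cancel hI0 hIt]
    simp
  · have : ∀ x, h x * (I ^ (-(1 / a)) * h x ^ (b - 1)) = I ^ (-(1 / a)) * h x ^ b := by
      intro x
      rw [mul_left_comm]
      congr 1
      nth_rewrite 1 [← ENNReal.rpow_one (h x)]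
      rw [← ENNReal.rpow_add_of_nonneg _ _ (by norm_num) (by linarith)]
      congr 1; ring
    simp_rw [this]
    rw [lintegral_const_mul' _ _ (ENNReal.rpow_ne_top_of_ne_zero hI0 hIt), ← hI]
    have e : I ^ (-(1 / a)) * I = I ^ (1 / b) := by
      nth_rewrite 2 [← ENNReal.rpow_one I]
      rw [← ENNReal.rpow_add _ _ hI0 hIt]
      congr 1
      have := hb.inv_add_inv_eq_one
      simp only [one_div]; linarith
    rw [e]
    exact le_mul_of_one_le_left (by simp) (by norm_num)

theorem lqNorm_count_le {α : Type*} [MeasurableSpace α] [MeasurableSingletonClass α]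
    [Countable α] {s : ℝ≥0∞} (hs : 1 ≤ s)
    {h : α → ℝ≥0∞} {M : ℝ≥0∞}
    (H : ∀ A : Finset α, lqNorm (Measure.count.restrict (A : Set α)) s h ≤ M) :
    lqNorm Measure.count s h ≤ M := by
  by_cases ht : s = ∞
  · simp only [lqNorm, ht, if_true] at H ⊢
    rw [essSup_count]
    apply iSup_le
    intro i
    refine le_trans ?_ (H {i})
    have := ENNReal.ae_le_essSup (μ := (Measure.count : Measure α).restrict
      ((({i} : Finset α)) : Set α)) h
    simpa [Measure.restrict_singleton, ae_dirac_eq] using this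
  · simp only [lqNorm, ht, if_false] at H ⊢
    have h0 : 0 < s.toReal := ENNReal.toReal_pos (by positivity) ht
    rw [one_div, ENNReal.rpow_inv_le_iff h0, lintegral_count, ENNReal.tsum_eq_iSup_sum]
    apply iSup_le
    intro A
    have := H A
    rw [one_div, ENNReal.rpow_inv_le_iff h0] at this
    refine le_trans (le_of_eq ?_) this
    rw [lintegral_finset]
    simp

theorem lqNorm_restrict {α : Type*} [MeasurableSpace α] {μ : Measure α}
    {s : ℝ≥0∞} (hs : 1 ≤ s) {h : α → ℝ≥0∞} {A : Set α} (hA : MeasurableSet A) :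
    lqNorm (μ.restrict A) s h = lqNorm μ s (A.indicator h) := by
  simp only [lqNorm]
  split_ifs with ht
  · rw [ENNReal.essSup_indicator_eq_essSup_restrict hA]
  · have h0 : 0 < s.toReal := ENNReal.toReal_pos (by positivity) ht
    rw [← lintegral_indicator hA]
    congr 2
    ext x
    by_cases hx : x ∈ A
    · simp [hx]
    · simp [hx, h0]

noncomputable def conjS {E : Type*} [NormedAddCommGroup E] [NormedSpace ℝ E]
    (f : SchwartzMap E ℂ) : SchwartzMap E ℂ :=
  SchwartzMap.postcompCLM (𝕜 := ℝ) (Complex.conjCLE : ℂ →L[ℝ] ℂ) f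

theorem conjS_apply {E : Type*} [NormedAddCommGroup E] [NormedSpace ℝ E]
    (f : SchwartzMap E ℂ) (x : E) : conjS f x = (starRingEnd ℂ) (f x) := by
  simp [conjS]

theorem gaussWin_conj {ι : Type*} [Fintype ι] (t : EuclideanSpace ℝ ι) :
    (starRingEnd ℂ) (gaussWin t) = gaussWin t := by
  unfold gaussWin
  rw [← Complex.exp_conj]
  simp

theorem STFT_conj {ι : Type*} [Fintype ι] (F : SchwartzMap (EuclideanSpace ℝ ι) ℂ)
    (x ω : EuclideanSpace ℝ ι) :
    STFT (conjS F) x ω = (starRingEnd ℂ) (STFT F x (-ω)) := by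
  unfold STFT
  rw [← integral_conj]
  congr 1
  ext t
  simp only [map_mul, conjS_apply, gaussWin_conj, ← Complex.exp_conj, Complex.conj_I,
    map_neg, Complex.conj_ofReal, inner_neg_left, Complex.ofReal_neg, map_ofNat]
  congr 2
  ring

theorem modNorm_conj {ι : Type*} [Fintype ι] (p q : ℝ≥0∞)
    (F : SchwartzMap (EuclideanSpace ℝ ι) ℂ) :
    modNorm p q (conjS F) = modNorm p q F := by
  unfold modNorm
  simp_rw [STFT_conj]
  have : ∀ x ω : EuclideanSpace ℝ ι, ‖(starRingEnd ℂ) (STFT F x (-ω))‖₊ = ‖STFT F x (-ω)‖₊ := by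
    intro x ω
    exact RCLike.nnnorm_conj _
  simp_rw [this]
  exact lqNorm_comp_equiv (MeasurableEquiv.neg _) (Measure.measurePreserving_neg volume) q
    (fun ω => lqNorm volume p fun x => (‖STFT F x ω‖₊ : ℝ≥0∞))

noncomputable def kerW {d : ℕ} (σ : EuclideanSpace ℝ (Fin d ⊕ Fin d) → ℂ)
    (x y : EuclideanSpace ℝ (Fin d)) : ℂ :=
  ∫ ω, Complex.exp (Complex.I * (2 * Real.pi * (inner ℝ (x - y) ω : ℝ))) *
    σ (pairE ((2 : ℝ)⁻¹ • (x + y)) ω)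

theorem weylOp_eq {d : ℕ} (σ : EuclideanSpace ℝ (Fin d ⊕ Fin d) → ℂ)
    (f : EuclideanSpace ℝ (Fin d) → ℂ) (x : EuclideanSpace ℝ (Fin d)) :
    weylOp σ f x = ∫ y, kerW σ x y * f y := by
  unfold weylOp kerW
  congr 1
  ext y
  rw [integral_mul_const]

theorem continuous_pairE {d : ℕ} :
    Continuous fun z : EuclideanSpace ℝ (Fin d) × EuclideanSpace ℝ (Fin d) => pairE z.1 z.2 := by
  unfold pairE
  refine (PiLp.continuous_toLp 2 _).comp ?_
  apply continuous_pi
  rintro (i | i) <;> simp <;> fun_prop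

theorem norm_le_pairE {d : ℕ} (x ω : EuclideanSpace ℝ (Fin d)) : ‖ω‖ ≤ ‖pairE x ω‖ := by
  rw [EuclideanSpace.norm_eq, EuclideanSpace.norm_eq]
  apply Real.sqrt_le_sqrt
  simp only [pairE, Fintype.sum_sum_type, Sum.elim_inl, Sum.elim_inr]
  have : 0 ≤ ∑ i, ‖x i‖ ^ 2 := by positivity
  linarith

theorem kerW_meas {d : ℕ} (σ : SchwartzMap (EuclideanSpace ℝ (Fin d ⊕ Fin d)) ℂ) :
    StronglyMeasurable (fun z : EuclideanSpace ℝ (Fin d) × EuclideanSpace ℝ (Fin d) =>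
      kerW σ z.1 z.2) := by
  unfold kerW
  apply StronglyMeasurable.integral_prod_right
    (f := fun (z : EuclideanSpace ℝ (Fin d) × EuclideanSpace ℝ (Fin d)) ω =>
      Complex.exp (Complex.I * (2 * Real.pi * (inner ℝ (z.1 - z.2) ω : ℝ))) *
    σ (pairE ((2 : ℝ)⁻¹ • (z.1 + z.2)) ω))
  apply Continuous.stronglyMeasurable
  simp only [Function.uncurry_def]
  apply Continuous.mul
  · fun_prop
  · refine σ.continuous.comp (continuous_pairE.comp (f := fun z : (EuclideanSpace ℝ (Fin d) × EuclideanSpace ℝ (Fin d)) × EuclideanSpace ℝ (Fin d) => ((2 : ℝ)⁻¹ • (z.1.1 + z.1.2), z.2)) ?_)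
    fun_prop

theorem kerW_bdd {d : ℕ} (σ : SchwartzMap (EuclideanSpace ℝ (Fin d ⊕ Fin d)) ℂ) :
    ∃ B : ℝ, ∀ x y, ‖kerW σ x y‖ ≤ B := by
  set D : ℝ := 2 ^ (d + 1) * (Finset.Iic ((d + 1, 0) : ℕ × ℕ)).sup
    (fun m => SchwartzMap.seminorm ℝ m.1 m.2) σ with hD
  have hσ : ∀ z, ‖σ z‖ * (1 + ‖z‖) ^ (d + 1) ≤ D := by
    intro z
    have := SchwartzMap.one_add_le_sup_seminorm_apply (𝕜 := ℝ) (m := (d + 1, 0)) (k := d + 1)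
      (n := 0) le_rfl le_rfl σ z
    rw [norm_iteratedFDeriv_zero] at this
    rw [mul_comm]; exact this
  have hD0 : 0 ≤ D := le_trans (by positivity) (hσ 0)
  refine ⟨∫ ω : EuclideanSpace ℝ (Fin d), D * (1 + ‖ω‖) ^ (-((d : ℝ) + 1)), fun x y => ?_⟩
  apply norm_integral_le_of_norm_le
  · apply Integrable.const_mul
    apply integrable_one_add_norm
    simp
  · refine Filter.Eventually.of_forall fun ω => ?_
    have e : Complex.I * (2 * Real.pi * (inner ℝ (x - y) ω : ℝ))
        = ((2 * Real.pi * inner ℝ (x - y) ω : ℝ) : ℂ) * Complex.I := by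
      push_cast; ring
    rw [norm_mul, e, Complex.norm_exp_ofReal_mul_I, one_mul]
    have h2 := hσ (pairE ((2 : ℝ)⁻¹ • (x + y)) ω)
    have h3 := norm_le_pairE ((2 : ℝ)⁻¹ • (x + y)) ω
    have h4 : 0 ≤ ‖ω‖ := norm_nonneg _
    rw [Real.rpow_neg (by positivity), ← div_eq_mul_inv, le_div_iff₀ (by positivity)]
    have e2 : (1 + ‖ω‖) ^ ((d : ℝ) + 1) = (1 + ‖ω‖) ^ (d + 1) := by
      rw [← Real.rpow_natCast]; push_cast; rfl
    rw [e2]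
    refine le_trans ?_ h2
    gcongr

theorem weylOp_meas {d : ℕ} (σ : SchwartzMap (EuclideanSpace ℝ (Fin d ⊕ Fin d)) ℂ)
    (f : SchwartzMap (EuclideanSpace ℝ (Fin d)) ℂ) : StronglyMeasurable (weylOp σ f) := by
  have : weylOp σ f = fun x => ∫ y, kerW σ x y * f y := by
    ext x; exact weylOp_eq _ _ _
  rw [this]
  apply StronglyMeasurable.integral_prod_right
    (f := fun x y => kerW σ x y * f y)
  exact (kerW_meas σ).mul (f.continuous.comp continuous_snd).stronglyMeasurable

theorem weylOp_bdd {d : ℕ} (σ : SchwartzMap (EuclideanSpace ℝ (Fin d ⊕ Fin d)) ℂ)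
    (f : SchwartzMap (EuclideanSpace ℝ (Fin d)) ℂ) : ∃ B : ℝ, ∀ x, ‖weylOp σ f x‖ ≤ B := by
  obtain ⟨B, hB⟩ := kerW_bdd σ
  refine ⟨∫ y, B * ‖f y‖, fun x => ?_⟩
  rw [weylOp_eq]
  apply norm_integral_le_of_norm_le (f.integrable.norm.const_mul B)
  refine Filter.Eventually.of_forall fun y => ?_
  rw [norm_mul]
  gcongr
  exact hB x y

theorem kerW_conj {d : ℕ} (σ : SchwartzMap (EuclideanSpace ℝ (Fin d ⊕ Fin d)) ℂ)
    (x y : EuclideanSpace ℝ (Fin d)) :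
    (starRingEnd ℂ) (kerW (conjS σ) y x) = kerW σ x y := by
  unfold kerW
  rw [← integral_conj]
  congr 1
  ext ω
  simp only [map_mul, conjS_apply, ← Complex.exp_conj, Complex.conj_I,
    Complex.conj_ofReal, map_ofNat, Complex.conj_conj]
  rw [add_comm y x, ← neg_sub x y, inner_neg_left]
  congr 2
  push_cast; ring

theorem weyl_pairing {d : ℕ} (σ : SchwartzMap (EuclideanSpace ℝ (Fin d ⊕ Fin d)) ℂ)
    (f g : SchwartzMap (EuclideanSpace ℝ (Fin d)) ℂ) :
    ∫ x, weylOp σ f x * g x = ∫ y, f y * (starRingEnd ℂ) (weylOp (conjS σ) (conjS g) y) := by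
  obtain ⟨B, hB⟩ := kerW_bdd σ
  have hint : Integrable (Function.uncurry fun x y : EuclideanSpace ℝ (Fin d) =>
      kerW σ x y * (g x * f y)) (volume.prod volume) := by
    have h1 : Integrable (fun z : EuclideanSpace ℝ (Fin d) × EuclideanSpace ℝ (Fin d) =>
      g z.1 * f z.2) (volume.prod volume) := g.integrable.mul_prod f.integrable
    exact h1.bdd_mul (kerW_meas σ).aestronglyMeasurable
      (c := B) (Filter.Eventually.of_forall fun z => hB _ _)
  calc ∫ x, weylOp σ f x * g x = ∫ x, ∫ y, kerW σ x y * (g x * f y) := by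
        congr 1; ext x
        rw [weylOp_eq, ← integral_mul_const]
        congr 1; ext y; ring
    _ = ∫ y, ∫ x, kerW σ x y * (g x * f y) := integral_integral_swap hint
    _ = _ := by
        congr 1; ext y
        rw [weylOp_eq, ← integral_conj, ← integral_const_mul]
        congr 1; ext x
        rw [map_mul, kerW_conj, conjS_apply, Complex.conj_conj]
        ring

noncomputable def flo (d : ℕ) (x : EuclideanSpace ℝ (Fin d)) : Fin d → ℤ := fun i => ⌊x i⌋

theorem measurable_flo (d : ℕ) : Measurable (flo d) := by
  unfold flo
  apply measurable_pi_lambda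
  intro i
  apply Int.measurable_floor.comp
  fun_prop

noncomputable def Qc (d : ℕ) (n : Fin d → ℤ) : Set (EuclideanSpace ℝ (Fin d)) := flo d ⁻¹' {n}

theorem measurableSet_Qc (d : ℕ) (n : Fin d → ℤ) : MeasurableSet (Qc d n) :=
  measurable_flo d (measurableSet_singleton n)

theorem mem_Qc {d : ℕ} {n : Fin d → ℤ} {x : EuclideanSpace ℝ (Fin d)} :
    x ∈ Qc d n ↔ flo d x = n := Iff.rfl

theorem isBounded_Qc (d : ℕ) (n : Fin d → ℤ) : Bornology.IsBounded (Qc d n) := by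
  set R : ℝ := ∑ i, |(n i : ℝ)| + 1 with hR
  rw [Metric.isBounded_iff_subset_closedBall 0]
  refine ⟨Real.sqrt (∑ _i : Fin d, R ^ 2), fun x hx => ?_⟩
  rw [mem_closedBall_zero_iff, EuclideanSpace.norm_eq]
  apply Real.sqrt_le_sqrt
  apply Finset.sum_le_sum
  intro i _
  have h1 : ⌊x i⌋ = n i := congrFun (mem_Qc.1 hx) i
  have h2 : |(n i : ℝ)| ≤ ∑ i, |(n i : ℝ)| :=
    Finset.single_le_sum (f := fun i => |(n i : ℝ)|) (fun i _ => abs_nonneg _) (Finset.mem_univ i)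
  have h3 := Int.floor_le (x i)
  have h4 := Int.lt_floor_add_one (x i)
  rw [h1] at h3 h4
  have h5 : ‖x i‖ ≤ R := by
    rw [Real.norm_eq_abs, abs_le]
    have := abs_le.1 (le_refl |(n i : ℝ)|)
    constructor <;> linarith
  gcongr

instance (d : ℕ) (n : Fin d → ℤ) : IsFiniteMeasure (volume.restrict (Qc d n)) :=
  ⟨by rw [Measure.restrict_apply_univ]; exact (isBounded_Qc d n).measure_lt_top⟩

theorem wNorm_eq (d : ℕ) (r s : ℝ≥0∞) (f : EuclideanSpace ℝ (Fin d) → ℂ) :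
    wNorm d r s f = lqNorm (Measure.count : Measure (Fin d → ℤ)) s fun n =>
      lqNorm (volume.restrict (Qc d n)) r fun x => ‖f x‖ₑ := by
  unfold wNorm
  congr 1
  ext n
  set v : EuclideanSpace ℝ (Fin d) := WithLp.toLp 2 fun i => (n i : ℝ) with hv
  have hset : unitCube d = (fun x => x + v) ⁻¹' Qc d n := by
    ext x
    simp only [unitCube, Set.mem_ofPred_eq, Set.mem_preimage, mem_Qc, flo, funext_iff]
    refine forall_congr' fun i => ?_
    have : (x + v) i = x i + n i := by simp [hv]
    rw [this, Int.floor_add_intCast, add_eq_right, Int.floor_eq_zero_iff]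
  have hmp : MeasurePreserving (MeasurableEquiv.addRight v)
      (volume.restrict (unitCube d)) (volume.restrict (Qc d n)) := by
    rw [hset]
    exact (measurePreserving_add_right volume v).restrict_preimage_emb
      (MeasurableEquiv.addRight v).measurableEmbedding _
  exact lqNorm_comp_equiv _ hmp r (fun x => ‖f x‖ₑ)

theorem lintegral_Qc (d : ℕ) (f : EuclideanSpace ℝ (Fin d) → ℝ≥0∞) :
    ∫⁻ x, f x = ∑' n, ∫⁻ x in Qc d n, f x := by
  have hU : (⋃ n, Qc d n) = Set.univ := by
    ext x; simp [mem_Qc]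
  rw [← lintegral_iUnion (measurableSet_Qc d), hU, setLIntegral_univ]
  intro a b hab
  exact Disjoint.preimage _ (by simpa using hab)

theorem wNorm_holder (d : ℕ) {r s : ℝ≥0∞} (hr : 1 ≤ r) (hs : 1 ≤ s)
    {f g : EuclideanSpace ℝ (Fin d) → ℂ} (hf : Measurable f) (hg : Measurable g) :
    ∫⁻ x, ‖f x‖ₑ * ‖g x‖ₑ ≤ wNorm d (dualExp r) (dualExp s) f * wNorm d r s g := by
  rw [wNorm_eq, wNorm_eq, lintegral_Qc]
  calc _ ≤ ∑' n, lqNorm (volume.restrict (Qc d n)) (dualExp r) (fun x => ‖f x‖ₑ) *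
        lqNorm (volume.restrict (Qc d n)) r (fun x => ‖g x‖ₑ) :=
        ENNReal.tsum_le_tsum fun n =>
          lqNorm_holder hr hf.enorm.aemeasurable hg.enorm.aemeasurable
    _ ≤ _ := by
        rw [← lintegral_count]
        exact lqNorm_holder hs (Measurable.of_discrete).aemeasurable
          (Measurable.of_discrete).aemeasurable

theorem weyl_pairing_bound (d : ℕ) (p q r s : ℝ≥0∞) (hr : 1 ≤ r) (hs : 1 ≤ s) (C : ℝ)
    (h : ∀ (σ : SchwartzMap (EuclideanSpace ℝ (Fin d ⊕ Fin d)) ℂ)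
        (f : SchwartzMap (EuclideanSpace ℝ (Fin d)) ℂ),
        wNorm d r s (weylOp ⇑σ ⇑f) ≤
          ENNReal.ofReal C * modNorm p q ⇑σ * wNorm d r s ⇑f)
    (σ : SchwartzMap (EuclideanSpace ℝ (Fin d ⊕ Fin d)) ℂ)
    (f g : SchwartzMap (EuclideanSpace ℝ (Fin d)) ℂ) :
    ‖∫ x, weylOp σ f x * g x‖ₑ ≤ (ENNReal.ofReal C * modNorm p q ⇑σ *
      wNorm d (dualExp r) (dualExp s) f) * wNorm d r s g := by
  rw [weyl_pairing]
  have h1 : wNorm d r s (conjS g) = wNorm d r s g := by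
    rw [wNorm_eq, wNorm_eq]
    simp_rw [conjS_apply]
    congr 1; ext n; congr 1; ext x
    exact RCLike.enorm_conj _
  have h2 := h (conjS σ) (conjS g)
  rw [modNorm_conj, h1] at h2
  calc _ ≤ ∫⁻ y, ‖f y‖ₑ * ‖weylOp (conjS σ) (conjS g) y‖ₑ := by
        refine (enorm_integral_le_lintegral_enorm _).trans (le_of_eq ?_)
        congr 1; ext y
        rw [enorm_mul]
        congr 1
        exact RCLike.enorm_conj _
    _ ≤ wNorm d (dualExp r) (dualExp s) f * wNorm d r s (weylOp (conjS σ) (conjS g)) :=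
        wNorm_holder d hr hs f.continuous.measurable (weylOp_meas _ _).measurable
    _ ≤ wNorm d (dualExp r) (dualExp s) f *
        (ENNReal.ofReal C * modNorm p q ⇑σ * wNorm d r s g) := by gcongr
    _ = _ := by ring

section
open scoped Convolution Topology

theorem moll_bound {E : Type*} [NormedAddCommGroup E] [InnerProductSpace ℝ E]
    [FiniteDimensional ℝ E] [MeasurableSpace E] [BorelSpace E]
    (φ : ContDiffBump (0 : E)) (g : E → ℂ) (x : E) {b δ : ℝ} (hδ : φ.rOut ≤ δ)
    (hb : ∀ᵐ y, dist x y < δ → ‖g y‖ ≤ b) :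
    ‖(φ.normed volume ⋆[ContinuousLinearMap.lsmul ℝ ℝ, volume] g) x‖ ≤ b := by
  rw [convolution_eq_swap]
  have h1 : ∫ t, φ.normed volume (x - t) * b = b := by
    rw [integral_mul_const, integral_sub_left_eq_self (fun t => φ.normed volume t) volume x,
      φ.integral_normed, one_mul]
  rw [← h1]
  apply norm_integral_le_of_norm_le
  · apply Integrable.mul_const
    exact (φ.integrable_normed (μ := volume)).comp_sub_left x
  · filter_upwards [hb] with t ht
    simp only [ContinuousLinearMap.lsmul_apply, norm_smul, Real.norm_eq_abs]
    rw [abs_of_nonneg (φ.nonneg_normed _)]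
    by_cases h : dist x t < δ
    · exact mul_le_mul_of_nonneg_left (ht h) (φ.nonneg_normed _)
    · have : φ.normed volume (x - t) = 0 := by
        by_contra h0
        have h2 : x - t ∈ Function.support (φ.normed volume) := h0
        rw [φ.support_normed_eq, mem_ball_zero_iff, ← dist_eq_norm] at h2
        exact h (h2.trans_le hδ)
      simp [this]

theorem moll_main (d : ℕ) {r s : ℝ≥0∞} (hr : 1 ≤ r) (hs : 1 ≤ s)
    {F : EuclideanSpace ℝ (Fin d) → ℂ} (hF : StronglyMeasurable F) {BF : ℝ}
    (hBF : ∀ x, ‖F x‖ ≤ BF) {M : ℝ≥0∞}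
    (hM : ∀ g : SchwartzMap (EuclideanSpace ℝ (Fin d)) ℂ,
      ‖∫ x, F x * g x‖ₑ ≤ M * wNorm d r s g)
    {g : EuclideanSpace ℝ (Fin d) → ℂ} (hg : Measurable g) {B : ℝ} (hB : ∀ x, ‖g x‖ ≤ B)
    (A : Finset (Fin d → ℤ)) (hA : ∀ y, g y ≠ 0 → flo d y ∈ A) {δ : ℝ} (hδ : 0 < δ)
    (hsep : ∀ x y, g y ≠ 0 → dist x y < δ → flo d x = flo d y) :
    ‖∫ x, F x * g x‖ₑ ≤ M * (2 * wNorm d r s g) := by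
  have hB0 : 0 ≤ B := (norm_nonneg _).trans (hB 0)
  have hBF0 : 0 ≤ BF := (norm_nonneg _).trans (hBF 0)
  -- support radius
  obtain ⟨R, hR⟩ : ∃ R : ℝ, ∀ y, g y ≠ 0 → ‖y‖ ≤ R := by
    have : Bornology.IsBounded (⋃ n ∈ A, Qc d n) :=
      (Bornology.isBounded_biUnion_finset A).2 fun n _ => isBounded_Qc d n
    obtain ⟨R, hR⟩ := this.subset_closedBall 0
    refine ⟨R, fun y hy => ?_⟩
    have := hR (Set.mem_biUnion (hA y hy) (mem_Qc.2 rfl))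
    simpa using this
  -- bumps
  let φ : ℕ → ContDiffBump (0 : EuclideanSpace ℝ (Fin d)) := fun k =>
    { rIn := δ / (k + 1) / 2
      rOut := δ / (k + 1)
      rIn_pos := by positivity
      rIn_lt_rOut := by
        apply _root_.half_lt_self
        positivity }
  have hφδ : ∀ k, (φ k).rOut ≤ δ := fun k => by
    change δ / (k + 1) ≤ δ
    apply div_le_self hδ.le
    have : (0 : ℝ) ≤ k := by positivity
    linarith
  have hφ0 : Filter.Tendsto (fun k => (φ k).rOut) Filter.atTop (𝓝 0) := by
    change Filter.Tendsto (fun k : ℕ => δ / ((k : ℝ) + 1)) Filter.atTop (𝓝 0)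
    have := (tendsto_one_div_add_atTop_nhds_zero_nat (𝕜 := ℝ)).const_mul δ
    simpa [div_eq_mul_inv] using this
  set G : ℕ → EuclideanSpace ℝ (Fin d) → ℂ := fun k =>
    ((φ k).normed volume ⋆[ContinuousLinearMap.lsmul ℝ ℝ, volume] g) with hG
  have hgb : ∀ k x b, (∀ᵐ y, dist x y < δ → ‖g y‖ ≤ b) → ‖G k x‖ ≤ b := fun k x b h =>
    moll_bound (φ k) g x (hφδ k) h
  have hGB : ∀ k x, ‖G k x‖ ≤ B := fun k x =>
    hgb k x B (Filter.Eventually.of_forall fun y _ => hB y)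
  have hGs : ∀ k x, R + δ < ‖x‖ → G k x = 0 := fun k x hx => by
    have := hgb k x 0 (Filter.Eventually.of_forall fun y hy => by
      by_contra h0
      have hgy : g y ≠ 0 := fun h => h0 (by simp [h])
      have h1 := hR y hgy
      have h2 : ‖x‖ ≤ ‖y‖ + dist x y := by
        rw [dist_eq_norm]
        calc ‖x‖ = ‖y + (x - y)‖ := by congr 1; abel
          _ ≤ _ := norm_add_le _ _
      linarith)
    simpa using this
  have hGQ : ∀ k n b, 0 ≤ b → (∀ᵐ y ∂(volume.restrict (Qc d n)), ‖g y‖ ≤ b) →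
      ∀ x ∈ Qc d n, ‖G k x‖ ≤ b := fun k n b hb h x hx => by
    rw [ae_restrict_iff' (measurableSet_Qc d n)] at h
    apply hgb
    filter_upwards [h] with y hy hxy
    by_cases h0 : g y = 0
    · simpa [h0] using hb
    · apply hy
      rw [mem_Qc, ← hsep x y h0 hxy]; exact hx
  have hgi : Integrable g := by
    refine Integrable.mono' (g := (Metric.closedBall 0 R).indicator fun _ => B) ?_
      hg.aestronglyMeasurable ?_
    · apply (integrable_indicator_iff measurableSet_closedBall).2
      exact integrableOn_const (measure_closedBall_lt_top.ne)
    · refine Filter.Eventually.of_forall fun y => ?_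
      by_cases h0 : g y = 0
      · simp only [h0, norm_zero]
        exact Set.indicator_nonneg (fun _ _ => hB0) _
      · rw [Set.indicator_of_mem (by simpa using hR y h0)]
        exact hB y
  have hGc : ∀ k, HasCompactSupport (G k) := fun k =>
    HasCompactSupport.intro (isCompact_closedBall 0 (R + δ)) fun x hx => by
      apply hGs
      simpa using hx
  have hGd : ∀ k, ContDiff ℝ ((⊤ : ℕ∞) : WithTop ℕ∞) (G k) := fun k =>
    HasCompactSupport.contDiff_convolution_left _ (φ k).hasCompactSupport_normed
      (φ k).contDiff_normed hgi.locallyIntegrable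
  have hlim : ∀ᵐ x, Filter.Tendsto (fun k => G k x) Filter.atTop (𝓝 (g x)) :=
    ContDiffBump.ae_convolution_tendsto_right_of_locallyIntegrable hφ0 (K := 2)
      (Filter.Eventually.of_forall fun k => by
        change δ / (k + 1) ≤ 2 * (δ / (k + 1) / 2)
        linarith) hgi.locallyIntegrable
  have hint : Filter.Tendsto (fun k => ∫ x, F x * G k x) Filter.atTop (𝓝 (∫ x, F x * g x)) := by
    refine tendsto_integral_of_dominated_convergence
      ((Metric.closedBall 0 (R + δ)).indicator fun _ => BF * B) ?_ ?_ ?_ ?_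
    · intro k
      exact (hF.mul (hGd k).continuous.stronglyMeasurable).aestronglyMeasurable
    · apply (integrable_indicator_iff measurableSet_closedBall).2
      exact integrableOn_const (measure_closedBall_lt_top.ne)
    · intro k
      refine Filter.Eventually.of_forall fun y => ?_
      by_cases h0 : R + δ < ‖y‖
      · rw [hGs k y h0]
        simp only [mul_zero, norm_zero]
        exact Set.indicator_nonneg (fun _ _ => by positivity) _
      · rw [Set.indicator_of_mem (by simpa using h0), norm_mul]
        exact mul_le_mul (hBF y) (hGB k y) (norm_nonneg _) hBF0
    · filter_upwards [hlim] with x hx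
      exact hx.const_mul _
  -- local norms
  have hloc0 : ∀ k n, (∀ᵐ y ∂(volume.restrict (Qc d n)), ‖g y‖ ≤ 0) →
      lqNorm (volume.restrict (Qc d n)) r (fun x => ‖G k x‖ₑ) ≤
        2 * lqNorm (volume.restrict (Qc d n)) r (fun x => ‖g x‖ₑ) := fun k n h => by
    have h2 : lqNorm (volume.restrict (Qc d n)) r (fun x => ‖G k x‖ₑ) ≤
        lqNorm (volume.restrict (Qc d n)) r (fun x => ‖g x‖ₑ) := by
      apply lqNorm_mono_ae
      filter_upwards [ae_restrict_mem (measurableSet_Qc d n)] with x hx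
      have := hGQ k n 0 le_rfl h x hx
      rw [norm_le_zero_iff.1 this]; simp
    exact h2.trans (le_mul_of_one_le_left (by simp) (by norm_num))
  have hloc : ∀ n, ∀ᶠ k in Filter.atTop,
      lqNorm (volume.restrict (Qc d n)) r (fun x => ‖G k x‖ₑ) ≤
        2 * lqNorm (volume.restrict (Qc d n)) r (fun x => ‖g x‖ₑ) := fun n => by
    by_cases ht : r = ∞
    · refine Filter.Eventually.of_forall fun k => ?_
      simp only [lqNorm, ht, if_true]
      set E := essSup (fun x => ‖g x‖ₑ) (volume.restrict (Qc d n)) with hE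
      have hEt : E ≠ ∞ := by
        have : E ≤ ENNReal.ofReal B := essSup_le_of_ae_le _ (Filter.Eventually.of_forall fun x => by
          change ‖g x‖ₑ ≤ ENNReal.ofReal B
          rw [← ofReal_norm]
          exact ENNReal.ofReal_le_ofReal (hB x))
        exact ne_top_of_le_ne_top ENNReal.ofReal_ne_top this
      have h1 : ∀ᵐ y ∂(volume.restrict (Qc d n)), ‖g y‖ ≤ E.toReal := by
        filter_upwards [ENNReal.ae_le_essSup (μ := volume.restrict (Qc d n)) (fun x => ‖g x‖ₑ)]
          with y hy
        rw [← toReal_enorm]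
        exact ENNReal.toReal_mono hEt hy
      have h2 : essSup (fun x => ‖G k x‖ₑ) (volume.restrict (Qc d n)) ≤ E := by
        refine essSup_le_of_ae_le _ ?_
        filter_upwards [ae_restrict_mem (measurableSet_Qc d n)] with x hx
        have := hGQ k n _ ENNReal.toReal_nonneg h1 x hx
        rw [← ofReal_norm]
        exact ENNReal.ofReal_le_of_le_toReal this
      exact h2.trans (le_mul_of_one_le_left (by simp) (by norm_num))
    · have hr0 : 0 < r.toReal := ENNReal.toReal_pos (by positivity) ht
      by_cases h0 : ∀ᵐ y ∂(volume.restrict (Qc d n)), ‖g y‖ ≤ 0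
      · exact Filter.Eventually.of_forall fun k => hloc0 k n h0
      simp only [lqNorm, ht, if_false]
      set I := ∫⁻ x in Qc d n, ‖g x‖ₑ ^ r.toReal with hI
      have hIne : I ≠ 0 := by
        intro hz
        apply h0
        rw [hI, lintegral_eq_zero_iff (by fun_prop)] at hz
        filter_upwards [hz] with y hy
        simp only [Pi.zero_apply, ENNReal.rpow_eq_zero_iff, hr0, and_true, enorm_eq_zero,
          enorm_ne_top, false_and, or_false] at hy
        simp [hy]
      have hbd : ∫⁻ _ in Qc d n, ENNReal.ofReal B ^ r.toReal ≠ ∞ := by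
        rw [lintegral_const]
        exact ENNReal.mul_ne_top (ENNReal.rpow_ne_top_of_nonneg hr0.le ENNReal.ofReal_ne_top)
          (measure_ne_top _ _)
      have hle : ∀ (z : ℂ), ‖z‖ ≤ B → ‖z‖ₑ ^ r.toReal ≤ ENNReal.ofReal B ^ r.toReal := by
        intro z hz
        apply ENNReal.rpow_le_rpow _ hr0.le
        rw [← ofReal_norm]
        exact ENNReal.ofReal_le_ofReal hz
      have hIt : I ≠ ∞ := ne_top_of_le_ne_top hbd (lintegral_mono fun x => hle _ (hB x))
      have hten : Filter.Tendsto (fun k => ∫⁻ x in Qc d n, ‖G k x‖ₑ ^ r.toReal) Filter.atTop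
          (𝓝 I) := by
        refine tendsto_lintegral_of_dominated_convergence (fun _ => ENNReal.ofReal B ^ r.toReal)
          ?_ ?_ hbd ?_
        · intro k
          have := (hGd k).continuous.measurable
          fun_prop
        · intro k
          exact Filter.Eventually.of_forall fun x => hle _ (hGB k x)
        · filter_upwards [ae_restrict_of_ae hlim] with x hx
          exact ((ENNReal.continuous_rpow_const).tendsto _).comp
            ((continuous_enorm.tendsto _).comp hx)
      have hten2 := ((ENNReal.continuous_rpow_const (y := 1 / r.toReal)).tendsto _).comp hten
      have hlt : I ^ (1 / r.toReal) < 2 * I ^ (1 / r.toReal) := by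
        have a0 : I ^ (1 / r.toReal) ≠ 0 := by
          simp [ENNReal.rpow_eq_zero_iff, hIne, hIt]
        have a1 : I ^ (1 / r.toReal) ≠ ∞ := ENNReal.rpow_ne_top_of_nonneg (by positivity) hIt
        rw [two_mul]
        exact ENNReal.lt_add_right a1 a0
      filter_upwards [hten2.eventually_lt_const hlt] with k hk
      exact hk.le
  have hW : ∀ᶠ k in Filter.atTop, wNorm d r s (G k) ≤ 2 * wNorm d r s g := by
    filter_upwards [(Filter.eventually_all_finset A).2 fun n _ => hloc n] with k hk
    rw [wNorm_eq, wNorm_eq, ← lqNorm_const_mul hs (by simp)]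
    apply lqNorm_mono
    intro n
    by_cases hn : n ∈ A
    · exact hk n hn
    · apply hloc0
      filter_upwards [ae_restrict_mem (measurableSet_Qc d n)] with y hy
      by_contra h0
      have hgy : g y ≠ 0 := fun h => h0 (by simp [h])
      apply hn
      rw [← mem_Qc.1 hy]
      exact hA y hgy
  refine le_of_tendsto ((continuous_enorm.tendsto _).comp hint) ?_
  filter_upwards [hW] with k hk
  have := hM ((hGc k).toSchwartzMap (hGd k))
  refine le_trans this ?_
  gcongr
  exact hk

noncomputable def Sset (d : ℕ) (δ : ℝ) : Set (EuclideanSpace ℝ (Fin d)) :=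
  {y | ∀ i, δ ≤ Int.fract (y i) ∧ Int.fract (y i) ≤ 1 - δ}

theorem measurableSet_Sset (d : ℕ) (δ : ℝ) : MeasurableSet (Sset d δ) := by
  have : Sset d δ = ⋂ i, {y : EuclideanSpace ℝ (Fin d) |
      δ ≤ Int.fract (y i) ∧ Int.fract (y i) ≤ 1 - δ} := by
    ext y; simp [Sset]
  rw [this]
  refine MeasurableSet.iInter fun i => ?_
  have h : Measurable fun y : EuclideanSpace ℝ (Fin d) => Int.fract (y i) :=
    measurable_fract.comp (by fun_prop)
  exact (measurableSet_le measurable_const h).inter (measurableSet_le h measurable_const)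

theorem Sset_sep {d : ℕ} {δ : ℝ} {x y : EuclideanSpace ℝ (Fin d)}
    (hy : y ∈ Sset d δ) (hxy : dist x y < δ) : flo d x = flo d y := by
  ext i
  unfold flo
  have h1 : |x i - y i| < δ := by
    refine lt_of_le_of_lt ?_ hxy
    rw [dist_eq_norm]
    exact PiLp.norm_apply_le (x - y) i
  obtain ⟨h2, h3⟩ := hy i
  rw [abs_lt] at h1
  have h4 := Int.floor_add_fract (y i)
  rw [Int.floor_eq_iff]
  constructor <;> linarith

theorem ae_fract (d : ℕ) : ∀ᵐ y : EuclideanSpace ℝ (Fin d), ∀ i, Int.fract (y i) ≠ 0 := by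
  rw [ae_all_iff]
  intro i
  have h0 : ∀ᵐ t : ℝ, Int.fract t ≠ 0 := by
    have hc : (Set.range ((↑) : ℤ → ℝ)).Countable := Set.countable_range _
    filter_upwards [hc.ae_notMem volume] with t ht h
    exact ht (Int.fract_eq_zero_iff.1 h)
  have h1 : Measure.QuasiMeasurePreserving (fun y : Fin d → ℝ => y i) volume volume :=
    Measure.quasiMeasurePreserving_eval _ i
  exact (PiLp.volume_preserving_ofLp (Fin d)).quasiMeasurePreserving.ae (h1.ae h0)

theorem eventually_Sset {d : ℕ} {y : EuclideanSpace ℝ (Fin d)}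
    (hy : ∀ i, Int.fract (y i) ≠ 0) :
    ∀ᶠ k : ℕ in Filter.atTop, y ∈ Sset d (1 / ((k : ℝ) + 1)) := by
  have ht := tendsto_one_div_add_atTop_nhds_zero_nat (𝕜 := ℝ)
  have : ∀ i, ∀ᶠ k : ℕ in Filter.atTop, 1 / ((k : ℝ) + 1) ≤ Int.fract (y i) ∧
      Int.fract (y i) ≤ 1 - 1 / ((k : ℝ) + 1) := by
    intro i
    have a : 0 < Int.fract (y i) := lt_of_le_of_ne (Int.fract_nonneg _) (hy i).symm
    have b : 0 < 1 - Int.fract (y i) := by linarith [Int.fract_lt_one (y i)]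
    filter_upwards [ht.eventually_lt_const a, ht.eventually_lt_const b] with k h1 h2
    constructor <;> linarith
  exact Filter.eventually_all.2 this

theorem test_bound (d : ℕ) {r s : ℝ≥0∞} (hr : 1 ≤ r) (hs : 1 ≤ s)
    {F : EuclideanSpace ℝ (Fin d) → ℂ} (hF : StronglyMeasurable F) {BF : ℝ}
    (hBF : ∀ x, ‖F x‖ ≤ BF) {M : ℝ≥0∞}
    (hM : ∀ g : SchwartzMap (EuclideanSpace ℝ (Fin d)) ℂ,
      ‖∫ x, F x * g x‖ₑ ≤ M * wNorm d r s g)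
    {G : EuclideanSpace ℝ (Fin d) → ℝ≥0∞} (hG : Measurable G) {D : ℝ≥0∞} (hD : D ≠ ∞)
    (hGD : ∀ x, G x ≤ D)
    (A : Finset (Fin d → ℤ)) (hA : ∀ y, G y ≠ 0 → flo d y ∈ A) :
    ∫⁻ x, ‖F x‖ₑ * G x ≤ M * (2 * lqNorm Measure.count s fun n =>
      lqNorm (volume.restrict (Qc d n)) r G) := by
  have hBF0 : 0 ≤ BF := (norm_nonneg _).trans (hBF 0)
  have hFm : Measurable F := hF.measurable
  have hGt : ∀ x, G x ≠ ∞ := fun x => ne_top_of_le_ne_top hD (hGD x)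
  set S : ℕ → Set (EuclideanSpace ℝ (Fin d)) := fun k => Sset d (1 / ((k : ℝ) + 1)) with hS
  have hSm : ∀ k, MeasurableSet (S k) := fun k => measurableSet_Sset d _
  have key : ∀ k, ∫⁻ x, (S k).indicator (fun x => ‖F x‖ₑ * G x) x ≤
      M * (2 * lqNorm Measure.count s fun n => lqNorm (volume.restrict (Qc d n)) r G) := by
    intro k
    set g : EuclideanSpace ℝ (Fin d) → ℂ := (S k).indicator fun x =>
      ((starRingEnd ℂ) (F x) / ‖F x‖) * ((G x).toReal : ℂ) with hg
    have hgm : Measurable g := by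
      apply Measurable.indicator _ (hSm k)
      have : Measurable fun x => (starRingEnd ℂ) (F x) := Complex.continuous_conj.measurable.comp hFm
      fun_prop
    have hgG : ∀ x, ‖g x‖ ≤ (G x).toReal := by
      intro x
      by_cases hx : x ∈ S k
      · rw [hg, Set.indicator_of_mem hx, norm_mul, norm_div, RCLike.norm_conj, Complex.norm_real,
          Complex.norm_real, norm_norm, Real.norm_of_nonneg ENNReal.toReal_nonneg]
        exact mul_le_of_le_one_left ENNReal.toReal_nonneg (div_self_le_one _)
      · rw [hg, Set.indicator_of_notMem hx]; simp
    have hgG' : ∀ x, ‖g x‖ₑ ≤ G x := by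
      intro x
      rw [← ofReal_norm]
      exact ENNReal.ofReal_le_of_le_toReal (hgG x)
    have hg0 : ∀ y, g y ≠ 0 → y ∈ S k ∧ G y ≠ 0 := by
      intro y hy
      refine ⟨Set.mem_of_indicator_ne_zero hy, fun h => hy ?_⟩
      have := hgG y
      simpa [h] using this
    have hpos : (0 : ℝ) < 1 / ((k : ℝ) + 1) := by positivity
    have h1 := moll_main d hr hs hF hBF hM hgm (B := D.toReal)
      (fun x => (hgG x).trans (ENNReal.toReal_mono hD (hGD x))) A
      (fun y hy => hA y (hg0 y hy).2) hpos
      (fun x y hy hxy => Sset_sep (hg0 y hy).1 hxy)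
    have h2 : wNorm d r s g ≤ lqNorm Measure.count s fun n =>
        lqNorm (volume.restrict (Qc d n)) r G := by
      rw [wNorm_eq]
      exact lqNorm_mono fun n => lqNorm_mono hgG'
    set w : EuclideanSpace ℝ (Fin d) → ℝ :=
      (S k).indicator fun x => ‖F x‖ * (G x).toReal with hw
    have hw0 : ∀ x, 0 ≤ w x := fun x =>
      Set.indicator_nonneg (fun _ _ => by positivity) _
    have hwm : Measurable w := by
      apply Measurable.indicator _ (hSm k)
      fun_prop
    have hwi : Integrable w := by
      have hT : MeasurableSet (flo d ⁻¹' (A : Set (Fin d → ℤ))) :=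
        measurable_flo d A.measurableSet
      have hTb : Bornology.IsBounded (flo d ⁻¹' (A : Set (Fin d → ℤ))) := by
        have : Bornology.IsBounded (⋃ n ∈ A, Qc d n) :=
          (Bornology.isBounded_biUnion_finset A).2 fun n _ => isBounded_Qc d n
        refine this.subset fun x hx => ?_
        exact Set.mem_biUnion hx (mem_Qc.2 rfl)
      refine Integrable.mono' (g := (flo d ⁻¹' (A : Set (Fin d → ℤ))).indicator
        fun _ => BF * D.toReal) ?_ hwm.aestronglyMeasurable ?_
      · apply (integrable_indicator_iff hT).2
        exact integrableOn_const hTb.measure_lt_top.ne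
      · refine Filter.Eventually.of_forall fun y => ?_
        rw [Real.norm_of_nonneg (hw0 y)]
        by_cases h0 : G y = 0
        · have : w y = 0 := by simp [hw, Set.indicator, h0]
          rw [this]
          exact Set.indicator_nonneg (fun _ _ => by positivity) _
        · rw [Set.indicator_of_mem (by exact hA y h0)]
          refine (Set.indicator_le_self' (fun _ _ => by positivity) y).trans ?_
          exact mul_le_mul (hBF y) (ENNReal.toReal_mono hD (hGD y)) ENNReal.toReal_nonneg hBF0
    have h3 : ∀ x, F x * g x = (w x : ℂ) := by
      intro x
      by_cases hx : x ∈ S k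
      · rw [hg, hw, Set.indicator_of_mem hx, Set.indicator_of_mem hx]
        by_cases h0 : F x = 0
        · simp [h0]
        · have hn : (‖F x‖ : ℂ) ≠ 0 := by simpa using h0
          rw [← mul_assoc, ← mul_div_assoc, Complex.mul_conj, Complex.normSq_eq_norm_sq]
          push_cast
          field_simp
      · rw [hg, hw, Set.indicator_of_notMem hx, Set.indicator_of_notMem hx]; simp
    have h4 : ‖∫ x, F x * g x‖ₑ = ∫⁻ x, (S k).indicator (fun x => ‖F x‖ₑ * G x) x := by
      simp_rw [h3]
      rw [integral_complex_ofReal, ← ofReal_norm, Complex.norm_real,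
        Real.norm_of_nonneg (integral_nonneg hw0),
        ofReal_integral_eq_lintegral_ofReal hwi (Filter.Eventually.of_forall hw0)]
      congr 1; ext x
      by_cases hx : x ∈ S k
      · rw [hw, Set.indicator_of_mem hx, Set.indicator_of_mem hx,
          ENNReal.ofReal_mul (norm_nonneg _), ofReal_norm, ENNReal.ofReal_toReal (hGt x)]
      · rw [hw, Set.indicator_of_notMem hx, Set.indicator_of_notMem hx]; simp
    rw [← h4]
    refine h1.trans ?_
    gcongr
  calc ∫⁻ x, ‖F x‖ₑ * G x
      = ∫⁻ x, Filter.liminf (fun k => (S k).indicator (fun x => ‖F x‖ₑ * G x) x)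
          Filter.atTop := by
        apply lintegral_congr_ae
        filter_upwards [ae_fract d] with y hy
        symm
        apply Filter.Tendsto.liminf_eq
        apply tendsto_const_nhds.congr'
        filter_upwards [eventually_Sset hy] with k hk
        rw [Set.indicator_of_mem hk]
    _ ≤ Filter.liminf (fun k => ∫⁻ x, (S k).indicator (fun x => ‖F x‖ₑ * G x) x)
          Filter.atTop := by
        apply lintegral_liminf_le
        intro k
        exact Measurable.indicator (by fun_prop) (hSm k)
    _ ≤ Filter.liminf (fun _ : ℕ => M * (2 * lqNorm Measure.count s fun n =>
          lqNorm (volume.restrict (Qc d n)) r G)) Filter.atTop :=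
        Filter.liminf_le_liminf (Filter.Eventually.of_forall key)
    _ = _ := Filter.liminf_const _

theorem lqNorm_ne_top {α : Type*} [MeasurableSpace α] {μ : Measure α} [IsFiniteMeasure μ]
    {p : ℝ≥0∞} {h : α → ℝ≥0∞} {B : ℝ≥0∞} (hB : B ≠ ∞)
    (hhB : ∀ x, h x ≤ B) : lqNorm μ p h ≠ ∞ := by
  unfold lqNorm
  split_ifs with hp
  · exact ne_top_of_le_ne_top hB (essSup_le_of_ae_le B (Filter.Eventually.of_forall hhB))
  · apply ENNReal.rpow_ne_top_of_nonneg (by positivity)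
    have : ∫⁻ x, h x ^ p.toReal ∂μ ≤ ∫⁻ x, B ^ p.toReal ∂μ :=
      lintegral_mono fun x => ENNReal.rpow_le_rpow (hhB x) (by positivity)
    refine ne_top_of_le_ne_top ?_ this
    rw [lintegral_const]
    exact ENNReal.mul_ne_top (ENNReal.rpow_ne_top_of_nonneg (by positivity) hB)
      (measure_ne_top _ _)

theorem amalgam_converse (d : ℕ) {r s : ℝ≥0∞} (hr : 1 ≤ r) (hs : 1 ≤ s)
    {F : EuclideanSpace ℝ (Fin d) → ℂ} (hF : StronglyMeasurable F) {BF : ℝ}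
    (hBF : ∀ x, ‖F x‖ ≤ BF) {M : ℝ≥0∞}
    (hM : ∀ g : SchwartzMap (EuclideanSpace ℝ (Fin d)) ℂ,
      ‖∫ x, F x * g x‖ₑ ≤ M * wNorm d r s g) :
    wNorm d (dualExp r) (dualExp s) F ≤ 8 * M := by
  have hFm : Measurable F := hF.measurable
  have hFB : ∀ x, ‖F x‖ₑ ≤ ENNReal.ofReal BF := fun x => by
    rw [← ofReal_norm]; exact ENNReal.ofReal_le_ofReal (hBF x)
  rw [wNorm_eq]
  set h : (Fin d → ℤ) → ℝ≥0∞ := fun n =>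
    lqNorm (volume.restrict (Qc d n)) (dualExp r) fun x => ‖F x‖ₑ with hh
  have hht : ∀ n, h n ≠ ∞ := fun n => lqNorm_ne_top ENNReal.ofReal_ne_top hFB
  apply lqNorm_count_le (one_le_dualExp hs)
  intro A
  have hAm : MeasurableSet (A : Set (Fin d → ℤ)) := A.measurableSet
  have : IsFiniteMeasure ((Measure.count : Measure (Fin d → ℤ)).restrict (A : Set (Fin d → ℤ))) :=
    ⟨by rw [Measure.restrict_apply_univ, Measure.count_apply_finset]; simp⟩
  have e1 : lqNorm (Measure.count.restrict (A : Set (Fin d → ℤ))) (dualExp s) h =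
      lqNorm (Measure.count.restrict (A : Set (Fin d → ℤ))) (dualExp s)
        ((A : Set (Fin d → ℤ)).indicator h) := by
    rw [lqNorm_restrict (one_le_dualExp hs) hAm, lqNorm_restrict (one_le_dualExp hs) hAm,
      Set.indicator_indicator, Set.inter_self]
  obtain ⟨a, -, ⟨Da, hDa, haD⟩, ha1, ha2⟩ := lqNorm_converse
    (μ := (Measure.count : Measure (Fin d → ℤ)).restrict (A : Set (Fin d → ℤ))) hs
    (h := (A : Set (Fin d → ℤ)).indicator h) Measurable.of_discrete
    (B := ∑ n ∈ A, h n) (by simpa using fun n _ => hht n) (by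
      intro n
      by_cases hn : n ∈ A
      · rw [Set.indicator_of_mem (by exact hn)]
        exact Finset.single_le_sum (f := h) (fun _ _ => by simp) hn
      · rw [Set.indicator_of_notMem (by exact hn)]; simp)
  have hu := fun n => lqNorm_converse (μ := volume.restrict (Qc d n)) hr
    (h := fun x => ‖F x‖ₑ) hFm.enorm ENNReal.ofReal_ne_top hFB
  choose u hum hub hu1 hu2 using hu
  choose D hD huD using hub
  set G : EuclideanSpace ℝ (Fin d) → ℝ≥0∞ := fun x =>
    ∑ n ∈ A, (Qc d n).indicator (fun x => a n * u n x) x with hG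
  have hGm : Measurable G := by
    apply Finset.measurable_sum
    intro n _
    exact ((hum n).const_mul _).indicator (measurableSet_Qc d n)
  have hGv : ∀ x, G x = if flo d x ∈ A then a (flo d x) * u (flo d x) x else 0 := by
    intro x
    simp only [hG, Set.indicator, mem_Qc]
    rw [Finset.sum_ite_eq]
  have hGb : ∀ x, G x ≤ ∑ n ∈ A, a n * D n := by
    intro x
    apply Finset.sum_le_sum
    intro n _
    refine (Set.indicator_le_self' (by simp) x).trans ?_
    gcongr
    exact huD n x
  have hDt : ∑ n ∈ A, a n * D n ≠ ∞ := by
    rw [ENNReal.sum_ne_top]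
    intro n _
    exact ENNReal.mul_ne_top (ne_top_of_le_ne_top hDa (haD n)) (hD n)
  have t1 := test_bound d hr hs hF hBF hM hGm hDt hGb A (by
    intro y hy
    by_contra hn
    exact hy (by rw [hGv, if_neg hn]))
  have t2 : (lqNorm Measure.count s fun n => lqNorm (volume.restrict (Qc d n)) r G) ≤ 1 := by
    refine le_trans ?_ ha1
    rw [lqNorm_restrict hs hAm]
    apply lqNorm_mono
    intro n
    by_cases hn : n ∈ A
    · rw [Set.indicator_of_mem (by exact hn)]
      calc _ ≤ lqNorm (volume.restrict (Qc d n)) r (fun x => a n * u n x) := by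
            apply lqNorm_mono_ae
            filter_upwards [ae_restrict_mem (measurableSet_Qc d n)] with x hx
            rw [hGv, mem_Qc.1 hx, if_pos hn]
        _ = a n * lqNorm (volume.restrict (Qc d n)) r (u n) :=
            lqNorm_const_mul hr (ne_top_of_le_ne_top hDa (haD n))
        _ ≤ a n * 1 := by gcongr; exact hu1 n
        _ = a n := mul_one _
    · rw [Set.indicator_of_notMem (by exact hn)]
      calc _ ≤ lqNorm (volume.restrict (Qc d n)) r (fun x => 0 * G x) := by
            apply lqNorm_mono_ae
            filter_upwards [ae_restrict_mem (measurableSet_Qc d n)] with x hx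
            rw [hGv, mem_Qc.1 hx, if_neg hn]; simp
        _ = 0 := by rw [lqNorm_const_mul hr (by simp), zero_mul]
  have t3 : ∫⁻ x, ‖F x‖ₑ * G x = ∑ n ∈ A, a n * ∫⁻ x in Qc d n, ‖F x‖ₑ * u n x := by
    simp only [hG, Finset.mul_sum]
    rw [lintegral_finsetSum]
    · refine Finset.sum_congr rfl fun n _ => ?_
      rw [← lintegral_const_mul' _ _ (ne_top_of_le_ne_top hDa (haD n)),
        ← lintegral_indicator (measurableSet_Qc d n)]
      congr 1; ext x
      by_cases hx : x ∈ Qc d n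
      · simp only [Set.indicator_of_mem hx]; ring
      · simp [Set.indicator_of_notMem hx]
    · intro n _
      exact hFm.enorm.mul (((hum n).const_mul _).indicator (measurableSet_Qc d n))
  have t4 : ∫⁻ n, (A : Set (Fin d → ℤ)).indicator h n * a n
      ∂((Measure.count : Measure (Fin d → ℤ)).restrict (A : Set (Fin d → ℤ))) ≤
      2 * ∫⁻ x, ‖F x‖ₑ * G x := by
    rw [lintegral_finset, t3, Finset.mul_sum]
    apply Finset.sum_le_sum
    intro n hn
    rw [Set.indicator_of_mem (by exact hn), Measure.count_singleton, mul_one, mul_left_comm,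
      mul_comm]
    gcongr
    exact hu2 n
  rw [e1]
  calc _ ≤ _ := ha2
    _ ≤ 2 * (2 * (M * (2 * 1))) := by
        gcongr
        refine t4.trans ?_
        gcongr
        refine t1.trans ?_
        gcongr
    _ = 8 * M := by ring

end

/-- duality for Weyl operators on Wiener amalgam spaces. -/
theorem weyl_amalgam_duality (d : ℕ) (p q r s : ℝ≥0∞)
    (hp : 1 ≤ p) (hq : 1 ≤ q) (hr : 1 ≤ r) (hs : 1 ≤ s)
    (h : ∃ C : ℝ, 0 < C ∧
      ∀ (σ : SchwartzMap (EuclideanSpace ℝ (Fin d ⊕ Fin d)) ℂ)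
        (f : SchwartzMap (EuclideanSpace ℝ (Fin d)) ℂ),
        wNorm d r s (weylOp ⇑σ ⇑f) ≤
          ENNReal.ofReal C * modNorm p q ⇑σ * wNorm d r s ⇑f) :
    ∃ C' : ℝ, 0 < C' ∧
      ∀ (σ : SchwartzMap (EuclideanSpace ℝ (Fin d ⊕ Fin d)) ℂ)
        (f : SchwartzMap (EuclideanSpace ℝ (Fin d)) ℂ),
        wNorm d (dualExp r) (dualExp s) (weylOp ⇑σ ⇑f) ≤
          ENNReal.ofReal C' * modNorm p q ⇑σ *
            wNorm d (dualExp r) (dualExp s) ⇑f := by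
  obtain ⟨C, hC, h⟩ := h
  refine ⟨8 * C, by positivity, fun σ f => ?_⟩
  obtain ⟨B, hB⟩ := weylOp_bdd σ f
  refine (amalgam_converse d hr hs (weylOp_meas σ f) hB
    (fun g => weyl_pairing_bound d p q r s hr hs C h σ f g)).trans (le_of_eq ?_)
  rw [ENNReal.ofReal_mul (by norm_num)]
  simp only [ENNReal.ofReal_ofNat]
  ring
end

section
/- Let h be a smooth compactly supported function on ℝ^d with h ≠ 0, and for λ ≥ 1 set h_λ(x) = h(x)·exp(−πiλ|x|²). Then for every 1 ≤ q ≤ ∞ there exist constants c₁, c₂ > 0 such that c₁ · λ^{d/q − d/2} ≤ ‖ĥ_λ‖_{L^q(ℝ^d)} ≤ c₂ · λ^{d/q − d/2} for all λ ≥ 1, where ĥ_λ denotes the Fourier transform of h_λ. -/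
open MeasureTheory SchwartzMap Complex ENNReal NNReal

open scoped FourierTransform LineDeriv ContDiff RealInnerProductSpace

/-- chirped function -/
noncomputable def chirpF {d : ℕ} (lam : ℝ) (h : EuclideanSpace ℝ (Fin d) → ℂ) :
    EuclideanSpace ℝ (Fin d) → ℂ :=
  fun x => h x * Complex.exp (Complex.I * (-(Real.pi * lam * ‖x‖ ^ 2)))

theorem fTrans_eq_fourier {d : ℕ} (f : EuclideanSpace ℝ (Fin d) → ℂ) : fTrans f = 𝓕 f := by
  ext w
  rw [Real.fourier_eq', fTrans]
  congr 1
  ext t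
  rw [smul_eq_mul, mul_comm]
  congr 2
  push_cast
  ring

theorem chirpF_contDiff {d : ℕ} (lam : ℝ) {h : EuclideanSpace ℝ (Fin d) → ℂ}
    (hsm : ContDiff ℝ ∞ h) : ContDiff ℝ ∞ (chirpF lam h) := by
  have : chirpF lam h = fun x => h x *
      Complex.exp (Complex.I * (-(Real.pi * lam * ((‖x‖ ^ 2 : ℝ) : ℂ)))) := by
    ext x; simp [chirpF]
  rw [this]
  have h1 : ContDiff ℝ ∞ (fun x : EuclideanSpace ℝ (Fin d) => ((‖x‖ ^ 2 : ℝ) : ℂ)) :=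
    Complex.ofRealCLM.contDiff.comp (contDiff_norm_sq ℝ)
  exact hsm.mul ((contDiff_const.mul ((contDiff_const.mul h1).neg)).cexp)

theorem chirpF_supp {d : ℕ} (lam : ℝ) {h : EuclideanSpace ℝ (Fin d) → ℂ}
    (hs : HasCompactSupport h) : HasCompactSupport (chirpF lam h) := hs.mul_right

theorem norm_chirp {d : ℕ} (lam : ℝ) (h : EuclideanSpace ℝ (Fin d) → ℂ) (x) :
    ‖chirpF lam h x‖ = ‖h x‖ := by
  have : Complex.I * (-(Real.pi * lam * ‖x‖ ^ 2)) =
    ((-(Real.pi * lam * ‖x‖ ^ 2) : ℝ) : ℂ) * Complex.I := by push_cast; ring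
  rw [chirpF, this, norm_mul, Complex.norm_exp_ofReal_mul_I, mul_one]

theorem disp_delta {d : ℕ} (h : 𝓢(EuclideanSpace ℝ (Fin d), ℂ)) (lam δ : ℝ) (hl : 1 ≤ lam)
    (hδ : 0 < δ) (w : EuclideanSpace ℝ (Fin d)) :
    ‖∫ v, h v * cexp (-(Real.pi * (δ + lam * Complex.I) : ℂ) * ‖v‖ ^ 2 +
      2 * Real.pi * Complex.I * ⟪-w, v⟫)‖ ≤ lam ^ (-(d : ℝ) / 2) * ∫ x, ‖(𝓕⁻ h) x‖ := by
  set b : ℂ := Real.pi * (δ + lam * Complex.I) with hb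
  have hbre : 0 < b.re := by
    simp [hb]; positivity
  set g : EuclideanSpace ℝ (Fin d) → ℂ := fun v => cexp (-b * ‖v‖ ^ 2 +
      2 * Real.pi * Complex.I * ⟪-w, v⟫) with hg
  have hgi : Integrable g := GaussianFourier.integrable_cexp_neg_mul_sq_norm_add hbre _ _
  have key : ∫ v, h v * g v = ∫ x, (𝓕⁻ h) x * 𝓕 g x := by
    have := VectorFourier.integral_fourierIntegral_smul_eq_flip (L := innerₗ _) (μ := volume) (ν := volume)
      Real.continuous_fourierChar continuous_inner (𝓕⁻ h).integrable hgi
    have e : (𝓕 (𝓕⁻ h)) = h := FourierTransform.fourier_fourierInv_eq h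
    have e2 : ∀ v, h v = (𝓕 (𝓕⁻ h)) v := fun v => by rw [e]
    simp_rw [e2]
    simp only [smul_eq_mul, flip_innerₗ] at this
    exact this
  rw [key]
  have hbd : ∀ x, ‖𝓕 g x‖ ≤ lam ^ (-(d : ℝ) / 2) := by
    intro x
    rw [hg, fourier_gaussian_innerProductSpace' hbre, norm_mul]
    have h1 : ‖cexp (-Real.pi ^ 2 * ‖-w - x‖ ^ 2 / b)‖ ≤ 1 := by
      rw [Complex.norm_exp, Real.exp_le_one_iff]
      have : (-Real.pi ^ 2 * ‖-w - x‖ ^ 2 / b : ℂ) =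
        ((-(Real.pi ^ 2 * ‖-w - x‖ ^ 2) : ℝ) : ℂ) * b⁻¹ := by push_cast; ring
      rw [this, Complex.re_ofReal_mul, Complex.inv_re]
      have : 0 ≤ b.re / Complex.normSq b := div_nonneg hbre.le (Complex.normSq_nonneg _)
      nlinarith [mul_nonneg (by positivity : 0 ≤ Real.pi ^ 2 * ‖-w - x‖ ^ 2) this]
    have h2 : ‖((Real.pi : ℂ) / b) ^ (Module.finrank ℝ (EuclideanSpace ℝ (Fin d)) / 2 : ℂ)‖
        ≤ lam ^ (-(d : ℝ) / 2) := by
      have e : (Module.finrank ℝ (EuclideanSpace ℝ (Fin d)) / 2 : ℂ) = (((d : ℝ) / 2 : ℝ) : ℂ) := by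
        simp
      rw [e, Complex.norm_cpow_real]
      have : ‖(Real.pi : ℂ) / b‖ ≤ lam⁻¹ := by
        have hpi := Real.pi_pos
        rw [hb, norm_div, norm_mul, Complex.norm_real, Real.norm_of_nonneg hpi.le]
        have h3 : lam ≤ ‖(δ + lam * Complex.I : ℂ)‖ := by
          have := Complex.abs_im_le_norm (δ + lam * Complex.I : ℂ)
          simp at this
          exact (le_abs_self _).trans this
        rw [div_mul_eq_div_div, div_self hpi.ne', one_div]
        exact inv_anti₀ (by linarith) h3
      calc _ ≤ (lam⁻¹) ^ ((d : ℝ) / 2) := by gcongr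
        _ = _ := by rw [Real.inv_rpow (by linarith), ← Real.rpow_neg (by linarith), neg_div]
    calc _ ≤ lam ^ (-(d : ℝ) / 2) * 1 := by gcongr
      _ = _ := mul_one _
  calc _ ≤ ∫ x, lam ^ (-(d : ℝ) / 2) * ‖(𝓕⁻ h) x‖ := by
        apply norm_integral_le_of_norm_le ((𝓕⁻ h).integrable.norm.const_mul _)
        filter_upwards with x
        rw [norm_mul, mul_comm]
        gcongr
        exact hbd x
    _ ≤ _ := by rw [integral_const_mul]

theorem disp {d : ℕ} (h : 𝓢(EuclideanSpace ℝ (Fin d), ℂ)) (lam : ℝ) (hl : 1 ≤ lam)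
    (w : EuclideanSpace ℝ (Fin d)) :
    ‖𝓕 (chirpF lam h) w‖ ≤ lam ^ (-(d : ℝ) / 2) * ∫ x, ‖(𝓕⁻ h) x‖ := by
  have ht : Filter.Tendsto (fun δ : ℝ => ∫ v, h v * cexp (-(Real.pi * (δ + lam * Complex.I) : ℂ) * ‖v‖ ^ 2 +
      2 * Real.pi * Complex.I * ⟪-w, v⟫)) (nhdsWithin 0 (Set.Ioi 0)) (nhds (𝓕 (chirpF lam h) w)) := by
    rw [← fTrans_eq_fourier, fTrans]
    apply tendsto_integral_filter_of_dominated_convergence (fun v => ‖h v‖)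
    · filter_upwards with δ
      apply Continuous.aestronglyMeasurable
      have := h.continuous
      fun_prop
    · filter_upwards [self_mem_nhdsWithin] with δ hδ
      filter_upwards with v
      rw [norm_mul, Complex.norm_exp]
      have : (-(Real.pi * (δ + lam * Complex.I) : ℂ) * ‖v‖ ^ 2 +
        2 * Real.pi * Complex.I * ⟪-w, v⟫).re = -(Real.pi * δ * ‖v‖ ^ 2) := by
        rw [← Complex.ofReal_pow]; simp [-Complex.ofReal_pow]
      rw [this]
      have : Real.exp (-(Real.pi * δ * ‖v‖ ^ 2)) ≤ 1 := by
        rw [Real.exp_le_one_iff]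
        have : (0:ℝ) < δ := hδ
        have : 0 ≤ Real.pi * δ * ‖v‖ ^ 2 := by positivity
        linarith
      exact mul_le_of_le_one_right (norm_nonneg _) this
    · exact h.integrable.norm
    · filter_upwards with v
      have : chirpF lam h v * cexp (Complex.I * (-(2 * Real.pi * (⟪v, w⟫ : ℝ)))) =
          h v * cexp (-(Real.pi * ((0 : ℝ) + lam * Complex.I) : ℂ) * ‖v‖ ^ 2 +
      2 * Real.pi * Complex.I * ⟪-w, v⟫) := by
        rw [chirpF, mul_assoc, ← Complex.exp_add, inner_neg_left, real_inner_comm]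
        congr 2
        push_cast
        ring
      rw [this]
      apply Filter.Tendsto.mono_left _ nhdsWithin_le_nhds
      apply Continuous.tendsto (f := fun δ : ℝ => h v * cexp (-(Real.pi * (δ + lam * Complex.I) : ℂ) * ‖v‖ ^ 2 +
      2 * Real.pi * Complex.I * ⟪-w, v⟫))
      fun_prop
  refine le_of_tendsto ht.norm ?_
  filter_upwards [self_mem_nhdsWithin] with δ hδ
  exact disp_delta h lam δ hl hδ w

theorem chirp_step {d : ℕ} {h : EuclideanSpace ℝ (Fin d) → ℂ} (hsm : ContDiff ℝ ∞ h)
    (hs : HasCompactSupport h) (lam : ℝ) (hl : 1 ≤ lam) (m w : EuclideanSpace ℝ (Fin d)) :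
    |⟪w, m⟫| / lam * ‖𝓕 (chirpF lam h) w‖ ≤ ‖𝓕 (chirpF lam (fun x => fderiv ℝ h x m)) w‖ +
      ‖𝓕 (chirpF lam (fun x => (⟪x, m⟫ : ℂ) * h x)) w‖ := by
  let f : 𝓢(EuclideanSpace ℝ (Fin d), ℂ) :=
    (chirpF_supp lam hs).toSchwartzMap (chirpF_contDiff lam hsm)
  have hfx : ⇑f = chirpF lam h := rfl
  have hd1 : ContDiff ℝ ∞ (fun x => fderiv ℝ h x m) :=
    (hsm.fderiv_right (m := ∞) (by simp)).clm_apply contDiff_const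
  have hs1 : HasCompactSupport (fun x => fderiv ℝ h x m) := hs.fderiv_apply ℝ m
  have hd2 : ContDiff ℝ ∞ (fun x => (⟪x, m⟫ : ℂ) * h x) :=
    (Complex.ofRealCLM.contDiff.comp (contDiff_id.inner ℝ contDiff_const)).mul hsm
  have hs2 : HasCompactSupport (fun x => (⟪x, m⟫ : ℂ) * h x) := hs.mul_left
  let f1 : 𝓢(EuclideanSpace ℝ (Fin d), ℂ) :=
    (chirpF_supp lam hs1).toSchwartzMap (chirpF_contDiff lam hd1)
  let f2 : 𝓢(EuclideanSpace ℝ (Fin d), ℂ) :=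
    (chirpF_supp lam hs2).toSchwartzMap (chirpF_contDiff lam hd2)
  have hder : ∂_{m} f = f1 - (2 * Real.pi * Complex.I * lam) • f2 := by
    ext x
    rw [SchwartzMap.lineDerivOp_apply_eq_fderiv]
    change fderiv ℝ (chirpF lam h) x m = chirpF lam (fun x => fderiv ℝ h x m) x -
      (2 * Real.pi * Complex.I * lam : ℂ) • chirpF lam (fun x => (⟪x, m⟫ : ℂ) * h x) x
    have e1 : HasFDerivAt (fun x : EuclideanSpace ℝ (Fin d) => ((‖x‖ ^ 2 : ℝ) : ℂ))
        (Complex.ofRealCLM.comp (2 • (innerSL ℝ x))) x :=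
      Complex.ofRealCLM.hasFDerivAt.comp x (hasStrictFDerivAt_norm_sq x).hasFDerivAt
    have e2 := (hsm.differentiable (by simp) x).hasFDerivAt.mul
      (((e1.const_mul (Real.pi * lam : ℂ)).neg.const_mul Complex.I).cexp)
    have e3 : chirpF lam h = fun x => h x *
      Complex.exp (Complex.I * (-(Real.pi * lam * ((‖x‖ ^ 2 : ℝ) : ℂ)))) := by
      ext x; simp [chirpF]
    rw [e3]
    erw [e2.fderiv]
    simp [chirpF]
    ring
  have hF := congrArg (fun φ : 𝓢(EuclideanSpace ℝ (Fin d), ℂ) => (𝓕 φ) w) hder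
  simp only [SchwartzMap.fourier_lineDerivOp_eq] at hF
  have htg : (fun x : EuclideanSpace ℝ (Fin d) => (inner ℝ x m : ℝ)).HasTemperateGrowth := by
    fun_prop
  have hlin : 𝓕 (f1 - (2 * Real.pi * Complex.I * lam : ℂ) • f2) =
      𝓕 f1 - (2 * Real.pi * Complex.I * lam : ℂ) • 𝓕 f2 := by
    change FourierTransform.fourierCLE ℂ 𝓢(EuclideanSpace ℝ (Fin d), ℂ) _ = _
    rw [map_sub, map_smul]; rfl
  rw [hlin] at hF
  have hF' : (2 * Real.pi * Complex.I : ℂ) • (⟪w, m⟫ • 𝓕 (chirpF lam h) w) =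
      𝓕 (chirpF lam (fun x => fderiv ℝ h x m)) w -
      (2 * Real.pi * Complex.I * lam : ℂ) • 𝓕 (chirpF lam (fun x => (⟪x, m⟫ : ℂ) * h x)) w := by
    rw [smul_apply, SchwartzMap.smulLeftCLM_apply_apply htg] at hF
    exact hF
  set A := 𝓕 (chirpF lam h) w
  set B := 𝓕 (chirpF lam (fun x => fderiv ℝ h x m)) w
  set C := 𝓕 (chirpF lam (fun x => (⟪x, m⟫ : ℂ) * h x)) w
  have hpi := Real.pi_gt_three
  have hl0 : 0 < lam := by linarith
  have h5 : 2 * Real.pi * (|⟪w, m⟫| * ‖A‖) ≤ ‖B‖ + 2 * Real.pi * lam * ‖C‖ := by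
    have := congrArg norm hF'
    have h6 := norm_sub_le B ((2 * Real.pi * Complex.I * lam : ℂ) • C)
    rw [← this] at h6
    simpa [abs_of_pos Real.pi_pos, abs_of_pos hl0] using h6
  have h7 : |⟪w, m⟫| * ‖A‖ ≤ (‖B‖ + ‖C‖) * lam := by
    have h8 : ‖B‖ ≤ 2 * Real.pi * lam * ‖B‖ := by
      apply le_mul_of_one_le_left (norm_nonneg _)
      nlinarith
    have : 2 * Real.pi * (|⟪w, m⟫| * ‖A‖) ≤ 2 * Real.pi * ((‖B‖ + ‖C‖) * lam) := by linarith
    exact le_of_mul_le_mul_left this (by positivity)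
  rw [div_mul_eq_mul_div, div_le_iff₀ hl0]
  exact h7

theorem decay {d : ℕ} (n : ℕ) : ∀ (h : EuclideanSpace ℝ (Fin d) → ℂ) (_ : ContDiff ℝ ∞ h)
    (_ : HasCompactSupport h), ∃ C : ℝ, 0 ≤ C ∧ ∀ lam : ℝ, 1 ≤ lam → ∀ w,
    (‖w‖ / lam) ^ n * ‖𝓕 (chirpF lam h) w‖ ≤ C * lam ^ (-(d : ℝ) / 2) := by
  induction n with
  | zero =>
    intro h hsm hs
    refine ⟨∫ x, ‖(𝓕⁻ (hs.toSchwartzMap hsm)) x‖, by positivity, fun lam hl w => ?_⟩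
    simpa [mul_comm] using! disp (hs.toSchwartzMap hsm) lam hl w
  | succ n ih =>
    intro h hsm hs
    have hd1 : ∀ m, ContDiff ℝ ∞ (fun x => fderiv ℝ h x m) := fun m =>
      (hsm.fderiv_right (m := ∞) (by simp)).clm_apply contDiff_const
    have hs1 : ∀ m, HasCompactSupport (fun x => fderiv ℝ h x m) := fun m => hs.fderiv_apply ℝ m
    have hd2 : ∀ m, ContDiff ℝ ∞ (fun x => (⟪x, m⟫ : ℂ) * h x) := fun m =>
      (Complex.ofRealCLM.contDiff.comp (contDiff_id.inner ℝ contDiff_const)).mul hsm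
    have hs2 : ∀ m : EuclideanSpace ℝ (Fin d), HasCompactSupport (fun x => (⟪x, m⟫ : ℂ) * h x) :=
      fun m => hs.mul_left
    choose C1 hC1 h1 using fun m => ih _ (hd1 m) (hs1 m)
    choose C2 hC2 h2 using fun m => ih _ (hd2 m) (hs2 m)
    let e : Fin d → EuclideanSpace ℝ (Fin d) := fun i => EuclideanSpace.single i 1
    refine ⟨∑ i, (C1 (e i) + C2 (e i)),
      Finset.sum_nonneg fun i _ => add_nonneg (hC1 _) (hC2 _), fun lam hl w => ?_⟩
    have hl0 : 0 < lam := by linarith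
    have hw : ‖w‖ ≤ ∑ i, |⟪w, e i⟫| := by
      rw [EuclideanSpace.norm_eq]
      apply Real.sqrt_le_iff.2 ⟨Finset.sum_nonneg fun i _ => abs_nonneg _, ?_⟩
      have := Finset.sum_sq_le_sq_sum_of_nonneg (s := Finset.univ) (f := fun i => |⟪w, e i⟫|)
        (fun i _ => abs_nonneg _)
      simpa [e, EuclideanSpace.inner_single_right] using this
    calc (‖w‖ / lam) ^ (n + 1) * ‖𝓕 (chirpF lam h) w‖
        = (‖w‖ / lam) ^ n * (‖w‖ / lam * ‖𝓕 (chirpF lam h) w‖) := by ring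
      _ ≤ (‖w‖ / lam) ^ n * ((∑ i, |⟪w, e i⟫|) / lam * ‖𝓕 (chirpF lam h) w‖) := by gcongr
      _ = ∑ i, (‖w‖ / lam) ^ n * (|⟪w, e i⟫| / lam * ‖𝓕 (chirpF lam h) w‖) := by
        rw [Finset.sum_div, Finset.sum_mul, Finset.mul_sum]
      _ ≤ ∑ i, (C1 (e i) + C2 (e i)) * lam ^ (-(d : ℝ) / 2) := by
        apply Finset.sum_le_sum
        intro i _
        have := mul_le_mul_of_nonneg_left (chirp_step hsm hs lam hl (e i) w)
          (by positivity : 0 ≤ (‖w‖ / lam) ^ n)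
        have a1 := h1 (e i) lam hl w
        have a2 := h2 (e i) lam hl w
        linarith
      _ = _ := by rw [Finset.sum_mul]

theorem upper {d : ℕ} (h : EuclideanSpace ℝ (Fin d) → ℂ) (hsm : ContDiff ℝ ∞ h)
    (hs : HasCompactSupport h) (q : ℝ≥0∞) (hq : 1 ≤ q) : ∃ c : ℝ, 0 < c ∧ ∀ lam : ℝ, 1 ≤ lam →
    eLpNorm (𝓕 (chirpF lam h)) q volume ≤
      ENNReal.ofReal (c * lam ^ ((d : ℝ) * invR q - d / 2)) := by
  obtain ⟨C0, hC0, h0⟩ := decay 0 h hsm hs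
  obtain ⟨C1, hC1, h1⟩ := decay (d + 1) h hsm hs
  let φ : EuclideanSpace ℝ (Fin d) → ℝ := fun y => (1 + ‖y‖) ^ (-((d + 1 : ℕ) : ℝ))
  have hφc : Measurable φ := by fun_prop
  have hφ1 : MemLp φ 1 volume := by
    rw [memLp_one_iff_integrable]
    apply integrable_one_add_norm
    simp
  have hφt : MemLp φ ∞ volume := by
    refine memLp_top_of_bound hφc.aestronglyMeasurable 1 (Filter.Eventually.of_forall fun y => ?_)
    rw [Real.norm_of_nonneg (by positivity)]
    apply Real.rpow_le_one_of_one_le_of_nonpos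
    · linarith [norm_nonneg y]
    · exact neg_nonpos.2 (Nat.cast_nonneg _)
  have hφ : MemLp φ q volume := by
    rcases eq_or_ne q ∞ with rfl | hqt
    · exact hφt
    have hq0 : q ≠ 0 := (zero_lt_one.trans_le hq).ne'
    rw [← integrable_norm_rpow_iff hφc.aestronglyMeasurable hq0 hqt]
    have hq1 : 1 ≤ q.toReal := by
      simpa using ENNReal.toReal_mono hqt hq
    refine (memLp_one_iff_integrable.1 hφ1).mono' (hφc.norm.pow_const _).aestronglyMeasurable
      (Filter.Eventually.of_forall fun y => ?_)
    have hy : 0 < φ y := by simp only [φ]; positivity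
    have hy1 : φ y ≤ 1 := by
      apply Real.rpow_le_one_of_one_le_of_nonpos
      · linarith [norm_nonneg y]
      · exact neg_nonpos.2 (Nat.cast_nonneg _)
    rw [Real.norm_of_nonneg (by positivity), Real.norm_of_nonneg hy.le]
    calc φ y ^ q.toReal ≤ φ y ^ (1 : ℝ) := Real.rpow_le_rpow_of_exponent_ge hy hy1 hq1
      _ = φ y := Real.rpow_one _
  set K : ℝ := 2 ^ (d + 1) * (C0 + C1) with hK
  have hK0 : 0 ≤ K := by positivity
  set M : ℝ := (eLpNorm φ q volume).toReal with hM
  have hM0 : 0 ≤ M := ENNReal.toReal_nonneg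
  refine ⟨K * M + 1, by positivity, fun lam hl => ?_⟩
  have hl0 : 0 < lam := by linarith
  have hpt : ∀ w, ‖𝓕 (chirpF lam h) w‖ ≤ (K * lam ^ (-(d : ℝ) / 2)) * ‖φ (lam⁻¹ • w)‖ := by
    intro w
    have a0 := h0 lam hl w
    have a1 := h1 lam hl w
    rw [pow_zero, one_mul] at a0
    have := pow_mul_le_of_le_of_pow_mul_le (k := 0) (l := d + 1) (x := ‖w‖ / lam)
      (by positivity) (norm_nonneg _) a0 (by simpa using a1)
    rw [pow_zero, one_mul] at this
    refine this.trans (le_of_eq ?_)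
    rw [Real.norm_of_nonneg (by positivity)]
    simp only [φ]
    rw [norm_smul, Real.norm_of_nonneg (by positivity), hK, div_eq_inv_mul]
    ring_nf
  have e1 := eLpNorm_le_mul_eLpNorm_of_ae_le_mul (μ := volume)
    (Filter.Eventually.of_forall hpt) q
  have e2 : eLpNorm (fun w => φ (lam⁻¹ • w)) q volume =
      ENNReal.ofReal (lam ^ ((d : ℝ) * invR q) * M) := by
    have hmap : Measure.map (fun w : EuclideanSpace ℝ (Fin d) => lam⁻¹ • w) volume =
        ENNReal.ofReal (lam ^ (d : ℝ)) • volume := by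
      have := Measure.map_addHaar_smul (volume : Measure (EuclideanSpace ℝ (Fin d)))
        (inv_ne_zero hl0.ne')
      rw [this]
      congr 2
      simp [abs_of_pos hl0]
    have := eLpNorm_map_measure (p := q) (μ := volume) (g := φ)
      (f := fun w : EuclideanSpace ℝ (Fin d) => lam⁻¹ • w)
      hφc.aestronglyMeasurable (by fun_prop)
    change eLpNorm (φ ∘ (fun w : EuclideanSpace ℝ (Fin d) => lam⁻¹ • w)) q volume = _
    rw [← this, hmap, eLpNorm_smul_measure_of_ne_zero (by simp; positivity)]
    rw [ENNReal.ofReal_mul (by positivity), hM, ENNReal.ofReal_toReal hφ.2.ne, smul_eq_mul,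
      Real.rpow_mul hl0.le, ENNReal.ofReal_rpow_of_pos (by positivity)]
    simp [invR]
  rw [e2, ← ENNReal.ofReal_mul (by positivity)] at e1
  refine e1.trans (ENNReal.ofReal_le_ofReal ?_)
  rw [sub_eq_add_neg, Real.rpow_add hl0, neg_div]
  have : 0 ≤ lam ^ ((d : ℝ) * invR q) * lam ^ (-((d : ℝ) / 2)) := by positivity
  linarith

theorem lower_pre {d : ℕ} (h : EuclideanSpace ℝ (Fin d) → ℂ) (hsm : ContDiff ℝ ∞ h)
    (hs : HasCompactSupport h) (q q' : ℝ≥0∞) [HolderTriple q q' 1] (lam : ℝ) :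
    ENNReal.ofReal (∫ x, ‖h x‖ ^ 2) ≤ eLpNorm (𝓕 (chirpF lam h)) q volume *
      eLpNorm (𝓕 (chirpF lam h)) q' volume := by
  let f : 𝓢(EuclideanSpace ℝ (Fin d), ℂ) :=
    (chirpF_supp lam hs).toSchwartzMap (chirpF_contDiff lam hsm)
  have hm : AEStronglyMeasurable (𝓕 (chirpF lam h)) volume :=
    (𝓕 f).continuous.aestronglyMeasurable
  have hP : ∫ x, ‖𝓕 (chirpF lam h) x‖ ^ 2 = ∫ x, ‖h x‖ ^ 2 := by
    have := SchwartzMap.integral_norm_sq_fourier f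
    have e : ∀ x, ‖f x‖ = ‖h x‖ := fun x => norm_chirp lam h x
    simp_rw [e] at this
    exact this
  rw [← hP]
  refine le_trans ?_ (eLpNorm_smul_le_mul_eLpNorm (r := 1) hm hm)
  rw [eLpNorm_one_eq_lintegral_enorm]
  have h2 : MemLp (𝓕 (chirpF lam h)) 2 volume := (𝓕 f).memLp 2 volume
  have hi := (memLp_two_iff_integrable_sq_norm hm).1 h2
  rw [ofReal_integral_eq_lintegral_ofReal hi (Filter.Eventually.of_forall fun x => by positivity)]
  apply le_of_eq
  congr 1
  ext x
  rw [← ofReal_norm]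
  simp [sq]

theorem norm_sq_pos {d : ℕ} (h : EuclideanSpace ℝ (Fin d) → ℂ) (hsm : ContDiff ℝ ∞ h)
    (hs : HasCompactSupport h) (hne : h ≠ 0) : 0 < ∫ x, ‖h x‖ ^ 2 := by
  obtain ⟨x, hx⟩ := Function.ne_iff.1 hne
  have hc : Continuous (fun x => ‖h x‖ ^ 2) := hsm.continuous.norm.pow 2
  refine hc.integral_pos_of_hasCompactSupport_nonneg_nonzero ?_ (fun x => by positivity) (x := x) ?_
  · have := hs.norm.mul_left (f := fun x => ‖h x‖)
    simpa [sq] using! this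
  · simpa using hx

/-- `‖ĥ_λ‖_{L^q} ≍ λ^{d/q - d/2}` for `h_λ(x) = h(x) e^{-πiλ|x|²}`. -/
theorem chirp_fourier_Lq_asymp (d : ℕ) (h : EuclideanSpace ℝ (Fin d) → ℂ)
    (hsm : ContDiff ℝ (⊤ : ℕ∞) h) (hsupp : HasCompactSupport h) (hne : h ≠ 0)
    (q : ℝ≥0∞) (hq : 1 ≤ q) :
    ∃ c₁ c₂ : ℝ, 0 < c₁ ∧ 0 < c₂ ∧
      ∀ lam : ℝ, 1 ≤ lam →
        ENNReal.ofReal (c₁ * lam ^ ((d : ℝ) * invR q - d / 2)) ≤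
          eLpNorm
            (fTrans fun x => h x * Complex.exp (Complex.I * (-(Real.pi * lam * ‖x‖ ^ 2))))
            q volume ∧
        eLpNorm
            (fTrans fun x => h x * Complex.exp (Complex.I * (-(Real.pi * lam * ‖x‖ ^ 2))))
            q volume ≤
          ENNReal.ofReal (c₂ * lam ^ ((d : ℝ) * invR q - d / 2)) := by
  have hsm' : ContDiff ℝ ((⊤ : ℕ∞) : WithTop ℕ∞) h := hsm
  set q' := ENNReal.conjExponent q with hq'
  have : HolderConjugate q q' := HolderConjugate.conjExponent hq
  have hq'1 : 1 ≤ q' := HolderConjugate.one_le q' q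
  obtain ⟨c₂, hc₂, hu⟩ := upper h hsm hsupp q hq
  obtain ⟨c', hc', hu'⟩ := upper h hsm hsupp q' hq'1
  have hN := norm_sq_pos h hsm hsupp hne
  set N := ∫ x, ‖h x‖ ^ 2
  refine ⟨N / c', c₂, by positivity, hc₂, fun lam hl => ?_⟩
  rw [fTrans_eq_fourier]
  refine ⟨?_, hu lam hl⟩
  have hl0 : 0 < lam := by linarith
  have hp := lower_pre h hsm hsupp q q' lam
  have hsum : invR q + invR q' = 1 := by
    have := HolderConjugate.inv_add_inv_eq_one q q'
    rw [invR, invR, ← ENNReal.toReal_add, this, ENNReal.toReal_one]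
    · exact ENNReal.inv_ne_top.2 (by positivity)
    · exact ENNReal.inv_ne_top.2 (by positivity)
  have hexp : (d : ℝ) * invR q' - d / 2 = -((d : ℝ) * invR q - d / 2) := by
    rw [← eq_sub_iff_add_eq'] at hsum
    rw [hsum]; ring
  have h3 := hp.trans (mul_le_mul_right (hu' lam hl) _)
  rw [hexp] at h3
  set α := (d : ℝ) * invR q - d / 2
  have hpos : 0 < c' * lam ^ (-α) := by positivity
  have h4 := ENNReal.div_le_of_le_mul h3
  rw [← ENNReal.ofReal_div_of_pos hpos] at h4
  have h5 : N / c' * lam ^ α = N / (c' * lam ^ (-α)) := by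
    rw [Real.rpow_neg hl0.le]; field_simp
  rw [h5]
  exact h4
end

section
/- Let h be a smooth compactly supported function on ℝ^d, and for λ ≥ 1 set h_λ(x) = h(x)·exp(−πiλ|x|²). Then for all 1 ≤ p, q ≤ ∞ there exists a constant c > 0 such that ‖ĥ_λ‖_{W(L^p,L^q)} ≤ c · λ^{d/q − d/2} for all λ ≥ 1, where ĥ_λ denotes the Fourier transform of h_λ. -/
open MeasureTheory SchwartzMap Complex ENNReal NNReal

lemma expI_contDiff : ContDiff ℝ (⊤ : ℕ∞) (fun t : ℝ => cexp (I * t)) :=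
  (contDiff_const.mul Complex.ofRealCLM.contDiff).cexp

lemma iterD (n : ℕ) : iteratedDeriv n (fun t : ℝ => cexp (I * t)) = fun t : ℝ => I ^ n * cexp (I * t) := by
  induction n with
  | zero => simp
  | succ n ih =>
    rw [iteratedDeriv_succ, ih]
    ext t
    have h1 : HasDerivAt (fun t : ℝ => I * (t:ℂ)) I t := by
      simpa using (Complex.ofRealCLM.hasDerivAt (x := t)).const_mul I
    have := (h1.cexp).const_mul (I ^ n)
    rw [this.deriv]; ring

lemma chirp_bound {V : Type*} [NormedAddCommGroup V] [InnerProductSpace ℝ V] (N : ℕ) :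
    ∃ (k : ℕ) (C : ℝ), 0 ≤ C ∧ ∀ μ : ℝ, 0 ≤ μ → μ ≤ 1 → ∀ n ≤ N, ∀ x : V,
      ‖iteratedFDeriv ℝ n (fun x : V => cexp (I * ((μ * (Real.pi * ‖x‖ ^ 2) : ℝ) : ℂ))) x‖
        ≤ C * (1 + ‖x‖) ^ k := by
  have ht : (fun x : V => Real.pi * ‖x‖ ^ 2).HasTemperateGrowth := by
    exact (Function.HasTemperateGrowth.const Real.pi).mul (Function.hasTemperateGrowth_norm_sq V)
  obtain ⟨k, C, hC, h⟩ := ht.norm_iteratedFDeriv_le_uniform N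
  refine ⟨k * N, N.factorial * (1 + C) ^ N, by positivity, ?_⟩
  intro μ h0 h1 n hn x
  have hx : 1 ≤ 1 + ‖x‖ := by simp
  have hD : 1 ≤ (1 + C) * (1 + ‖x‖) ^ k := by
    have := one_le_pow₀ hx (n := k)
    nlinarith
  have key := norm_iteratedFDeriv_comp_le (𝕜 := ℝ) (g := fun t : ℝ => cexp (I * t))
    (f := fun x : V => μ * (Real.pi * ‖x‖ ^ 2)) (n := n) (N := (⊤ : ℕ∞)) (C := 1)
    (D := (1 + C) * (1 + ‖x‖) ^ k)
    expI_contDiff (contDiff_const.mul ht.1) (by exact_mod_cast le_top) x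
    (by
      intro i hi
      rw [norm_iteratedFDeriv_eq_norm_iteratedDeriv, iterD]
      rw [norm_mul, norm_pow, Complex.norm_I, one_pow, one_mul, Complex.norm_exp_I_mul_ofReal])
    (by
      intro i hi1 hi
      have : (fun x : V => μ * (Real.pi * ‖x‖ ^ 2)) = μ • (fun x : V => Real.pi * ‖x‖ ^ 2) := rfl
      rw [this, iteratedFDeriv_const_smul_apply ((ht.1.of_le (by exact_mod_cast le_top)).contDiffAt), norm_smul, Real.norm_of_nonneg h0]
      calc μ * _ ≤ 1 * (C * (1 + ‖x‖) ^ k) := by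
            gcongr
            exact h i (hi.trans hn) x
        _ ≤ (1 + C) * (1 + ‖x‖) ^ k := by
            rw [one_mul]; gcongr; linarith
        _ ≤ _ := le_self_pow₀ hD (by omega))
  refine key.trans ?_
  calc _ ≤ N.factorial * 1 * ((1 + C) * (1 + ‖x‖) ^ k) ^ N := by
        gcongr
    _ = _ := by rw [mul_pow, ← pow_mul]; ring

lemma chirp_contDiff {V : Type*} [NormedAddCommGroup V] [InnerProductSpace ℝ V] (μ : ℝ) :
    ContDiff ℝ (⊤ : ℕ∞) (fun x : V => cexp (I * ((μ * (Real.pi * ‖x‖ ^ 2) : ℝ) : ℂ))) := by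
  have h1 : ContDiff ℝ (⊤ : ℕ∞) (fun x : V => μ * (Real.pi * ‖x‖ ^ 2)) :=
    contDiff_const.mul (contDiff_const.mul (contDiff_norm_sq ℝ))
  exact expI_contDiff.comp h1

lemma schwartz_int {V : Type*} [NormedAddCommGroup V] [InnerProductSpace ℝ V]
    [FiniteDimensional ℝ V] [MeasurableSpace V] [BorelSpace V] (H : 𝓢(V, ℂ)) (k i : ℕ) :
    Integrable (fun x => (1 + ‖x‖) ^ k * ‖iteratedFDeriv ℝ i H x‖) := by
  have h0 := H.integrable_pow_mul_iteratedFDeriv (volume : Measure V) 0 i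
  have hk := H.integrable_pow_mul_iteratedFDeriv (volume : Measure V) k i
  have := (h0.add hk).const_mul (2 ^ (k - 1))
  refine this.mono' ?_ ?_
  · have : Continuous (fun x => iteratedFDeriv ℝ i H x) :=
      (H.smooth i).continuous_iteratedFDeriv (le_refl _)
    exact (by fun_prop : Continuous (fun x => (1 + ‖x‖) ^ k * ‖iteratedFDeriv ℝ i H x‖)).aestronglyMeasurable
  · refine Filter.Eventually.of_forall fun x => ?_
    rw [Real.norm_of_nonneg (by positivity)]
    have := add_pow_le zero_le_one (norm_nonneg x) k
    simp only [Pi.add_apply, pow_zero, one_mul]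
    calc _ ≤ (2 ^ (k - 1) * (1 ^ k + ‖x‖ ^ k)) * ‖iteratedFDeriv ℝ i H x‖ := by gcongr
      _ = _ := by rw [one_pow]; ring

lemma chirp_decay {V : Type*} [NormedAddCommGroup V] [InnerProductSpace ℝ V]
    [FiniteDimensional ℝ V] [MeasurableSpace V] [BorelSpace V] (H : 𝓢(V, ℂ)) (N : ℕ) :
    ∃ C : ℝ, 0 ≤ C ∧ ∀ μ : ℝ, 0 ≤ μ → μ ≤ 1 → ∀ w : V,
      (1 + ‖w‖) ^ N * ‖FourierTransform.fourier
        (fun x : V => H x * cexp (I * ((μ * (Real.pi * ‖x‖ ^ 2) : ℝ) : ℂ))) w‖ ≤ C := by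
  obtain ⟨k, C, hC, hb⟩ := chirp_bound (V := V) N
  let B : ℕ → V → ℝ := fun q x => ∑ i ∈ Finset.range (q + 1),
    (q.choose i * C) * ((1 + ‖x‖) ^ k * ‖iteratedFDeriv ℝ i H x‖)
  have hBint : ∀ q, Integrable (B q) := fun q =>
    integrable_finsetSum _ fun i _ => (schwartz_int H k i).const_mul _
  have hB0 : ∀ q x, 0 ≤ B q x := fun q x => by positivity
  have hBI0 : ∀ q, 0 ≤ ∫ v, B q v := fun q => integral_nonneg (hB0 q)
  have hn : ∀ n ≤ N, ∀ μ : ℝ, 0 ≤ μ → μ ≤ 1 → ∀ w : V, ‖w‖ ^ n * ‖FourierTransform.fourier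
        (fun x : V => H x * cexp (I * ((μ * (Real.pi * ‖x‖ ^ 2) : ℝ) : ℂ))) w‖ ≤
        2 ^ n * ∑ q ∈ Finset.range (n + 1), ∫ v, B q v := by
    intro n hn μ h0 h1 w
    have hcd : ContDiff ℝ (⊤ : ℕ∞)
        (fun x : V => H x * cexp (I * ((μ * (Real.pi * ‖x‖ ^ 2) : ℝ) : ℂ))) :=
      (H.smooth _).mul (chirp_contDiff μ)
    have hle : ∀ q ≤ N, ∀ x, ‖iteratedFDeriv ℝ q
        (fun x : V => H x * cexp (I * ((μ * (Real.pi * ‖x‖ ^ 2) : ℝ) : ℂ))) x‖ ≤ B q x := by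
      intro q hq x
      refine (norm_iteratedFDeriv_mul_le (N := (⊤ : ℕ∞)) (H.smooth _) (chirp_contDiff μ) x
        (by exact_mod_cast le_top)).trans ?_
      refine Finset.sum_le_sum fun i _ => ?_
      calc _ ≤ (q.choose i : ℝ) * ‖iteratedFDeriv ℝ i H x‖ * (C * (1 + ‖x‖) ^ k) := by
            gcongr
            exact hb μ h0 h1 _ (by omega) x
        _ = _ := by ring
    have hint : ∀ q ≤ N, Integrable (fun x => ‖iteratedFDeriv ℝ q
        (fun x : V => H x * cexp (I * ((μ * (Real.pi * ‖x‖ ^ 2) : ℝ) : ℂ))) x‖) := by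
      intro q hq
      refine (hBint q).mono' ?_ ?_
      · exact ((hcd.continuous_iteratedFDeriv (by exact_mod_cast le_top)).norm).aestronglyMeasurable
      · exact Filter.Eventually.of_forall fun x => by
          rw [norm_norm]; exact hle q hq x
    have := Real.pow_mul_norm_iteratedFDeriv_fourier_le (K := 0) (N := N)
      (hcd.of_le (by exact_mod_cast le_top)) (by
        intro k' n' hk hn'
        have hk' : k' = 0 := by simpa using hk
        subst hk'
        simpa using hint n' (by exact_mod_cast hn')) (k := 0) (n := n) (by simp)
        (by exact_mod_cast hn) w
    rw [norm_iteratedFDeriv_zero] at this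
    refine this.trans ?_
    simp only [pow_zero, one_mul, zero_add, Finset.range_one, Finset.singleton_product,
      Finset.sum_map, Function.Embedding.coeFn_mk, CharP.cast_eq_zero, mul_zero]
    gcongr with q hq
    · have := Finset.mem_range.1 hq
      exact hint q (by omega)
    · exact hBint q
    · have := Finset.mem_range.1 hq
      exact fun v => hle q (by omega) v
  refine ⟨2 ^ (N - 1) * ((2 ^ 0 * ∑ q ∈ Finset.range (0 + 1), ∫ v, B q v) +
    2 ^ N * ∑ q ∈ Finset.range (N + 1), ∫ v, B q v), ?_, ?_⟩
  · have h1 := Finset.sum_nonneg fun q (_ : q ∈ Finset.range (0 + 1)) => hBI0 q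
    have h2 := Finset.sum_nonneg fun q (_ : q ∈ Finset.range (N + 1)) => hBI0 q
    positivity
  · intro μ h0 h1 w
    have a := hn 0 (Nat.zero_le _) μ h0 h1 w
    have b := hn N le_rfl μ h0 h1 w
    have c := add_pow_le zero_le_one (norm_nonneg w) N
    rw [one_pow] at c
    rw [pow_zero, one_mul] at a
    refine (mul_le_mul_of_nonneg_right c (norm_nonneg _)).trans ?_
    rw [mul_assoc, add_mul, one_mul]
    gcongr

lemma gauss_parseval {V : Type*} [NormedAddCommGroup V] [InnerProductSpace ℝ V]
    [FiniteDimensional ℝ V] [MeasurableSpace V] [BorelSpace V] (H : 𝓢(V, ℂ)) (b : ℂ)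
    (hb : 0 < b.re) (ω : V) :
    ∫ x, FourierTransform.fourier (H : V → ℂ) x *
        cexp (-b * ‖x‖ ^ 2 + 2 * Real.pi * I * (inner ℝ (-ω) x : ℝ)) =
      (Real.pi / b) ^ (Module.finrank ℝ V / 2 : ℂ) *
        ∫ ξ, H ξ * cexp (-Real.pi ^ 2 * ‖-ω - ξ‖ ^ 2 / b) := by
  have hG := GaussianFourier.integrable_cexp_neg_mul_sq_norm_add hb (2 * Real.pi * I) (-ω)
  have key := VectorFourier.integral_fourierIntegral_smul_eq_flip (L := innerₗ V)
    (e := Real.fourierChar) (μ := (volume : Measure V)) (ν := (volume : Measure V))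
    (f := (H : V → ℂ)) Real.continuous_fourierChar continuous_inner H.integrable hG
  rw [flip_innerₗ] at key
  have e1 : ∀ x, VectorFourier.fourierIntegral Real.fourierChar (volume : Measure V) (innerₗ V)
    (H : V → ℂ) x = FourierTransform.fourier (H : V → ℂ) x := fun x => rfl
  have e2 : ∀ x, VectorFourier.fourierIntegral Real.fourierChar (volume : Measure V) (innerₗ V)
    (fun v : V => cexp (-b * ‖v‖ ^ 2 + 2 * Real.pi * I * (inner ℝ (-ω) v : ℝ))) x =
      (Real.pi / b) ^ (Module.finrank ℝ V / 2 : ℂ) * cexp (-Real.pi ^ 2 * ‖-ω - x‖ ^ 2 / b) :=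
    fun x => fourier_gaussian_innerProductSpace' hb (-ω) x
  simp only [e1, e2, smul_eq_mul] at key
  rw [key, ← integral_const_mul]
  congr 1; ext x; ring

lemma chirp_identity {V : Type*} [NormedAddCommGroup V] [InnerProductSpace ℝ V]
    [FiniteDimensional ℝ V] [MeasurableSpace V] [BorelSpace V] (H : 𝓢(V, ℂ)) (lam : ℝ)
    (hl : 0 < lam) (ω : V) :
    ∫ x, FourierTransform.fourier (H : V → ℂ) x *
        cexp (-(Real.pi * lam * I) * ‖x‖ ^ 2 + 2 * Real.pi * I * (inner ℝ (-ω) x : ℝ)) =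
      (Real.pi / (Real.pi * lam * I)) ^ (Module.finrank ℝ V / 2 : ℂ) *
        ∫ ξ, H ξ * cexp (-Real.pi ^ 2 * ‖-ω - ξ‖ ^ 2 / (Real.pi * lam * I)) := by
  set b : ℝ → ℂ := fun ε => ε + Real.pi * lam * I with hbdef
  have hbre : ∀ ε, (b ε).re = ε := fun ε => by simp [hbdef]
  have hb0 : b 0 = Real.pi * lam * I := by simp [hbdef]
  have hbne : b 0 ≠ 0 := by
    rw [hb0]; simp [Real.pi_ne_zero, hl.ne']
  have hbt : Filter.Tendsto b (nhdsWithin 0 (Set.Ioi 0)) (nhds (b 0)) := by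
    have : Continuous b := by fun_prop
    exact this.continuousAt.tendsto.mono_left nhdsWithin_le_nhds
  have hpos : ∀ᶠ ε : ℝ in nhdsWithin 0 (Set.Ioi 0), 0 < ε := self_mem_nhdsWithin
  rw [← hb0]
  have hF : Continuous (FourierTransform.fourier (H : V → ℂ)) := by
    rw [← SchwartzMap.fourier_coe]; exact SchwartzMap.continuous _
  have hFi : Integrable (FourierTransform.fourier (H : V → ℂ)) := by
    rw [← SchwartzMap.fourier_coe]; exact SchwartzMap.integrable _
  have L1 : Filter.Tendsto (fun ε => ∫ x, FourierTransform.fourier (H : V → ℂ) x *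
        cexp (-b ε * ‖x‖ ^ 2 + 2 * Real.pi * I * (inner ℝ (-ω) x : ℝ)))
      (nhdsWithin 0 (Set.Ioi 0)) (nhds (∫ x, FourierTransform.fourier (H : V → ℂ) x *
        cexp (-b 0 * ‖x‖ ^ 2 + 2 * Real.pi * I * (inner ℝ (-ω) x : ℝ)))) := by
    refine tendsto_integral_filter_of_dominated_convergence
      (fun x => ‖FourierTransform.fourier (H : V → ℂ) x‖) ?_ ?_ hFi.norm ?_
    · refine Filter.Eventually.of_forall fun ε => ?_
      have : Continuous (fun x : V => FourierTransform.fourier (H : V → ℂ) x *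
        cexp (-b ε * ‖x‖ ^ 2 + 2 * Real.pi * I * (inner ℝ (-ω) x : ℝ))) := by fun_prop
      exact this.aestronglyMeasurable
    · filter_upwards [hpos] with ε hε
      refine Filter.Eventually.of_forall fun x => ?_
      rw [norm_mul]
      refine mul_le_of_le_one_right (norm_nonneg _) ?_
      rw [Complex.norm_exp, Real.exp_le_one_iff]
      have : (-b ε * ‖x‖ ^ 2 + 2 * Real.pi * I * (inner ℝ (-ω) x : ℝ)).re = - (ε * ‖x‖ ^ 2) := by
        rw [show ((‖x‖ : ℂ)) ^ 2 = ((‖x‖ ^ 2 : ℝ) : ℂ) by push_cast; rfl, Complex.add_re,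
          Complex.re_mul_ofReal, Complex.re_mul_ofReal, Complex.neg_re, hbre]
        simp
      rw [this]
      have : 0 ≤ ε * ‖x‖ ^ 2 := by positivity
      linarith
    · refine Filter.Eventually.of_forall fun x => ?_
      refine Filter.Tendsto.const_mul _ ?_
      refine (Complex.continuous_exp.tendsto _).comp ?_
      exact (hbt.neg.mul_const _).add_const _
  have L2 : Filter.Tendsto (fun ε => ∫ ξ, H ξ * cexp (-Real.pi ^ 2 * ‖-ω - ξ‖ ^ 2 / b ε))
      (nhdsWithin 0 (Set.Ioi 0)) (nhds (∫ ξ, H ξ * cexp (-Real.pi ^ 2 * ‖-ω - ξ‖ ^ 2 / b 0))) := by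
    refine tendsto_integral_filter_of_dominated_convergence
      (fun x => ‖H x‖) ?_ ?_ H.integrable.norm ?_
    · refine Filter.Eventually.of_forall fun ε => ?_
      have hH := H.continuous
      have : Continuous (fun ξ : V => H ξ * cexp (-Real.pi ^ 2 * ‖-ω - ξ‖ ^ 2 / b ε)) := by
        fun_prop
      exact this.aestronglyMeasurable
    · filter_upwards [hpos] with ε hε
      refine Filter.Eventually.of_forall fun x => ?_
      rw [norm_mul]
      refine mul_le_of_le_one_right (norm_nonneg _) ?_
      rw [Complex.norm_exp, Real.exp_le_one_iff]
      have : (-Real.pi ^ 2 * ‖-ω - x‖ ^ 2 / b ε : ℂ).re =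
          - (Real.pi ^ 2 * ‖-ω - x‖ ^ 2) * (ε / normSq (b ε)) := by
        rw [show (-Real.pi ^ 2 * ‖-ω - x‖ ^ 2 / b ε : ℂ) =
          ((- (Real.pi ^ 2 * ‖-ω - x‖ ^ 2) : ℝ) : ℂ) * (b ε)⁻¹ by push_cast; ring,
          Complex.re_ofReal_mul, Complex.inv_re, hbre]
      rw [this]
      have h1 := normSq_nonneg (b ε)
      have : 0 ≤ (Real.pi ^ 2 * ‖-ω - x‖ ^ 2) * (ε / normSq (b ε)) := by positivity
      linarith
    · refine Filter.Eventually.of_forall fun x => ?_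
      refine Filter.Tendsto.const_mul _ ?_
      refine (Complex.continuous_exp.tendsto _).comp ?_
      exact tendsto_const_nhds.div hbt hbne
  have L3 : Filter.Tendsto (fun ε => ((Real.pi : ℂ) / b ε) ^ (Module.finrank ℝ V / 2 : ℂ))
      (nhdsWithin 0 (Set.Ioi 0)) (nhds ((Real.pi / b 0) ^ (Module.finrank ℝ V / 2 : ℂ))) := by
    refine Filter.Tendsto.cpow (tendsto_const_nhds.div hbt hbne) tendsto_const_nhds ?_
    right
    rw [div_eq_mul_inv, Complex.im_ofReal_mul, Complex.inv_im, hb0]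
    have h3 : 0 < normSq (Real.pi * lam * I) := normSq_pos.2 (hb0 ▸ hbne)
    have : 0 < Real.pi * lam := by positivity
    simp [Real.pi_ne_zero, hl.ne']
  refine tendsto_nhds_unique L1 ((L3.mul L2).congr' ?_)
  filter_upwards [hpos] with ε hε
  exact (gauss_parseval H (b ε) (by rw [hbre]; exact hε) ω).symm

lemma chirp_norm {V : Type*} [NormedAddCommGroup V] [InnerProductSpace ℝ V]
    [FiniteDimensional ℝ V] [MeasurableSpace V] [BorelSpace V] (H : 𝓢(V, ℂ)) (lam : ℝ)
    (hl : 0 < lam) (ω : V) :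
    ‖∫ x, FourierTransform.fourier (H : V → ℂ) x *
        cexp (-(Real.pi * lam * I) * ‖x‖ ^ 2 + 2 * Real.pi * I * (inner ℝ (-ω) x : ℝ))‖ =
      lam ^ (-(Module.finrank ℝ V / 2 : ℝ)) * ‖FourierTransform.fourier
        (fun x : V => H x * cexp (I * ((lam⁻¹ * (Real.pi * ‖x‖ ^ 2) : ℝ) : ℂ)))
          (-(lam⁻¹ • ω))‖ := by
  rw [chirp_identity H lam hl ω, norm_mul]
  congr 1
  · have e : (Real.pi / (Real.pi * lam * I) : ℂ) = ((lam⁻¹ : ℝ) : ℂ) * (-I) := by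
      have : (Real.pi : ℂ) ≠ 0 := by exact_mod_cast Real.pi_ne_zero
      have : (lam : ℂ) ≠ 0 := by exact_mod_cast hl.ne'
      push_cast
      field_simp
      simp
    have hne : (((lam⁻¹ : ℝ) : ℂ) * (-I)) ≠ 0 := by simp [hl.ne']
    have hr : (Module.finrank ℝ V / 2 : ℂ) = ((Module.finrank ℝ V / 2 : ℝ) : ℂ) := by push_cast; rfl
    rw [e, norm_cpow_of_ne_zero hne, hr, Complex.ofReal_im, mul_zero, Real.exp_zero, div_one,
      Complex.ofReal_re, norm_mul, norm_neg, Complex.norm_I, mul_one, Complex.norm_real,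
      Real.norm_of_nonneg (by positivity), Real.inv_rpow hl.le, Real.rpow_neg hl.le]
  · rw [Real.fourier_eq']
    have : ∀ ξ, H ξ * cexp (-Real.pi ^ 2 * ‖-ω - ξ‖ ^ 2 / (Real.pi * lam * I)) =
        cexp (I * ((lam⁻¹ * (Real.pi * ‖ω‖ ^ 2) : ℝ) : ℂ)) *
        (cexp (((-2 * Real.pi * inner ℝ ξ (-(lam⁻¹ • ω)) : ℝ) : ℂ) * I) •
          (H ξ * cexp (I * ((lam⁻¹ * (Real.pi * ‖ξ‖ ^ 2) : ℝ) : ℂ)))) := by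
      intro ξ
      have h1 : ‖-ω - ξ‖ ^ 2 = ‖ω‖ ^ 2 + 2 * inner ℝ ξ ω + ‖ξ‖ ^ 2 := by
        rw [show -ω - ξ = -(ω + ξ) by abel, norm_neg, norm_add_sq_real, real_inner_comm]
      have h2 : (‖-ω - ξ‖ : ℂ) ^ 2 = ((‖ω‖ ^ 2 + 2 * inner ℝ ξ ω + ‖ξ‖ ^ 2 : ℝ) : ℂ) := by
        rw [← h1]; push_cast; rfl
      rw [smul_eq_mul, show ∀ a b c d : ℂ, a * (b * (c * d)) = c * (a * b * d) by intros; ring,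
        ← Complex.exp_add, ← Complex.exp_add, h2, inner_neg_right, real_inner_smul_right]
      congr 2
      have : (Real.pi : ℂ) ≠ 0 := by exact_mod_cast Real.pi_ne_zero
      have : (lam : ℂ) ≠ 0 := by exact_mod_cast hl.ne'
      push_cast
      field_simp
      rw [Complex.I_sq]
      ring
    simp_rw [this]
    rw [integral_const_mul, norm_mul, Complex.norm_exp_I_mul_ofReal, one_mul]

lemma pointwise_bound (d : ℕ) (h : EuclideanSpace ℝ (Fin d) → ℂ)
    (hsm : ContDiff ℝ (⊤ : ℕ∞) h) (hsupp : HasCompactSupport h) :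
    ∃ C : ℝ, 0 ≤ C ∧ ∀ lam : ℝ, 1 ≤ lam → ∀ ω : EuclideanSpace ℝ (Fin d),
      ‖fTrans (fun x => h x * Complex.exp (Complex.I * (-(Real.pi * lam * ‖x‖ ^ 2)))) ω‖ ≤
        C * lam ^ (-(d / 2 : ℝ)) * ((1 + lam⁻¹ * ‖ω‖) ^ (2 * d))⁻¹ := by
  let h' : 𝓢(EuclideanSpace ℝ (Fin d), ℂ) := hsupp.toSchwartzMap hsm
  let H : 𝓢(EuclideanSpace ℝ (Fin d), ℂ) := FourierTransformInv.fourierInv h'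
  have hH : FourierTransform.fourier (H : EuclideanSpace ℝ (Fin d) → ℂ) = h := by
    rw [← SchwartzMap.fourier_coe, FourierTransform.fourier_fourierInv_eq]
    rfl
  obtain ⟨C, hC, hb⟩ := chirp_decay H (2 * d)
  refine ⟨C, hC, fun lam hl ω => ?_⟩
  have hl0 : 0 < lam := by linarith
  have e : fTrans (fun x => h x * Complex.exp (Complex.I * (-(Real.pi * lam * ‖x‖ ^ 2)))) ω =
      ∫ x, FourierTransform.fourier (H : EuclideanSpace ℝ (Fin d) → ℂ) x *
        cexp (-(Real.pi * lam * I) * ‖x‖ ^ 2 + 2 * Real.pi * I * (inner ℝ (-ω) x : ℝ)) := by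
    rw [hH, fTrans]
    congr 1; ext x
    rw [mul_assoc, ← Complex.exp_add, inner_neg_left, real_inner_comm]
    congr 2
    push_cast
    ring
  rw [e, chirp_norm H lam hl0 ω, finrank_euclideanSpace_fin]
  have := hb lam⁻¹ (by positivity) (inv_le_one_of_one_le₀ hl) (-(lam⁻¹ • ω))
  rw [norm_neg, norm_smul, Real.norm_of_nonneg (by positivity : 0 ≤ lam⁻¹)] at this
  rw [mul_comm C, mul_assoc]
  gcongr
  rw [← div_eq_mul_inv, le_div_iff₀ (by positivity), mul_comm]
  exact this

lemma weight_bound (d : ℕ) (lam : ℝ) (hl : 1 ≤ lam) (x : EuclideanSpace ℝ (Fin d))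
    (hx : x ∈ unitCube d) (n : Fin d → ℤ) :
    ((1 + lam⁻¹ * ‖x + (WithLp.toLp 2 fun i => (n i : ℝ) : EuclideanSpace ℝ (Fin d))‖) ^ (2 * d))⁻¹
      ≤ 4 ^ d * ∏ i, ((1 + lam⁻¹ * |(n i : ℝ)|) ^ 2)⁻¹ := by
  set y := x + (WithLp.toLp 2 fun i => (n i : ℝ) : EuclideanSpace ℝ (Fin d)) with hy
  have hl0 : 0 < lam := by linarith
  have hli : lam⁻¹ ≤ 1 := inv_le_one_of_one_le₀ hl
  have hli0 : 0 < lam⁻¹ := by positivity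
  have h1 : ∀ i, ((1 + lam⁻¹ * ‖y‖) ^ 2)⁻¹ ≤ 4 * ((1 + lam⁻¹ * |(n i : ℝ)|) ^ 2)⁻¹ := by
    intro i
    have hyi : y i = x i + n i := by simp [hy]
    have hn : |y i| ≤ ‖y‖ := by simpa using PiLp.norm_apply_le y i
    have hxi := hx i
    have hk : |(n i : ℝ)| ≤ ‖y‖ + 1 := by
      have : (n i : ℝ) = y i - x i := by rw [hyi]; ring
      rw [this]
      have h3 := abs_sub (y i) (x i)
      have h4 : |x i| ≤ 1 := by rw [abs_of_nonneg hxi.1]; exact hxi.2.le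
      linarith
    have h5 : 1 + lam⁻¹ * |(n i : ℝ)| ≤ 2 * (1 + lam⁻¹ * ‖y‖) := by
      have := mul_le_mul_of_nonneg_left hk hli0.le
      have : 0 ≤ lam⁻¹ * ‖y‖ := by positivity
      nlinarith
    have h6 : (1 + lam⁻¹ * |(n i : ℝ)|) ^ 2 ≤ (2 * (1 + lam⁻¹ * ‖y‖)) ^ 2 := by
      gcongr
    rw [← div_eq_mul_inv, le_div_iff₀ (by positivity), inv_mul_le_iff₀ (by positivity)]
    linarith
  calc _ = ∏ i : Fin d, ((1 + lam⁻¹ * ‖y‖) ^ 2)⁻¹ := by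
        simp [pow_mul]
    _ ≤ ∏ i : Fin d, (4 * ((1 + lam⁻¹ * |(n i : ℝ)|) ^ 2)⁻¹) :=
        Finset.prod_le_prod (fun i _ => by positivity) (fun i _ => h1 i)
    _ = _ := by simp [Finset.prod_mul_distrib]

lemma sum_range_bound (lam : ℝ) (hl : 1 ≤ lam) (m : ℕ) :
    ∑ k ∈ Finset.range m, ((1 + lam⁻¹ * ((k : ℝ) + 1)) ^ 2)⁻¹ ≤ lam - lam ^ 2 / (lam + m) := by
  have hl0 : 0 < lam := by linarith
  induction m with
  | zero =>
    have : lam ^ 2 / lam = lam := by field_simp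
    simp [this]
  | succ m ih =>
    rw [Finset.sum_range_succ]
    have : ((1 + lam⁻¹ * ((m : ℝ) + 1)) ^ 2)⁻¹ ≤ lam ^ 2 / (lam + m) - lam ^ 2 / (lam + m + 1) := by
      have e1 : ((1 + lam⁻¹ * ((m : ℝ) + 1)) ^ 2)⁻¹ = lam ^ 2 / (lam + m + 1) ^ 2 := by
        field_simp
        ring
      have e2 : lam ^ 2 / (lam + m) - lam ^ 2 / (lam + m + 1) =
          lam ^ 2 / ((lam + m) * (lam + m + 1)) := by
        field_simp
        ring
      rw [e1, e2]
      gcongr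
      nlinarith [(Nat.cast_nonneg m : (0:ℝ) ≤ m)]
    push_cast
    rw [← add_assoc]
    linarith

lemma tsum_int_bound (lam : ℝ) (hl : 1 ≤ lam) :
    ∑' k : ℤ, ENNReal.ofReal (((1 + lam⁻¹ * |(k : ℝ)|) ^ 2)⁻¹) ≤ ENNReal.ofReal (3 * lam) := by
  have hl0 : 0 < lam := by linarith
  have hN : ∑' k : ℕ, ENNReal.ofReal (((1 + lam⁻¹ * ((k : ℝ) + 1)) ^ 2)⁻¹) ≤ ENNReal.ofReal lam := by
    refine ENNReal.tsum_le_of_sum_range_le fun m => ?_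
    rw [← ENNReal.ofReal_sum_of_nonneg (fun i _ => by positivity)]
    refine ENNReal.ofReal_le_ofReal ((sum_range_bound lam hl m).trans ?_)
    have : 0 ≤ lam ^ 2 / (lam + m) := by positivity
    linarith
  rw [tsum_of_add_one_of_neg_add_one ENNReal.summable ENNReal.summable]
  have a1 : ∀ k : ℕ, |(((k : ℤ) + 1 : ℤ) : ℝ)| = (k : ℝ) + 1 := fun k => by
    push_cast; exact abs_of_nonneg (by positivity)
  have a2 : ∀ k : ℕ, |((-((k : ℤ) + 1) : ℤ) : ℝ)| = (k : ℝ) + 1 := fun k => by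
    rw [Int.cast_neg, abs_neg, a1]
  simp_rw [a1, a2]
  refine (add_le_add (add_le_add hN (le_of_eq_of_le (by simp) (ENNReal.ofReal_le_ofReal hl))) hN).trans ?_
  rw [← ENNReal.ofReal_add hl0.le hl0.le, ← ENNReal.ofReal_add (by positivity) hl0.le]
  exact ENNReal.ofReal_le_ofReal (by linarith)

lemma tsum_pi_bound (d : ℕ) (f : ℤ → ℝ≥0∞) :
    ∑' n : Fin d → ℤ, ∏ i, f (n i) ≤ (∑' k, f k) ^ d := by
  classical
  rw [ENNReal.tsum_eq_iSup_sum]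
  refine iSup_le fun s => ?_
  let t : Fin d → Finset ℤ := fun i => s.image fun n => n i
  calc ∑ n ∈ s, ∏ i, f (n i) ≤ ∑ n ∈ Fintype.piFinset t, ∏ i, f (n i) := by
        refine Finset.sum_le_sum_of_subset fun n hn => ?_
        rw [Fintype.mem_piFinset]
        exact fun i => Finset.mem_image_of_mem (fun n : Fin d → ℤ => n i) hn
    _ = ∏ i, ∑ k ∈ t i, f k := (Finset.prod_univ_sum t fun _ k => f k).symm
    _ ≤ ∏ i : Fin d, ∑' k, f k := Finset.prod_le_prod' fun i _ => ENNReal.sum_le_tsum _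
    _ = _ := by simp

lemma volume_unitCube_le (d : ℕ) : volume (unitCube d) ≤ 1 := by
  have : unitCube d = (WithLp.ofLp) ⁻¹' (Set.pi Set.univ fun _ : Fin d => Set.Ico (0 : ℝ) 1) := by
    ext x; simp [unitCube]
  rw [this, (PiLp.volume_preserving_ofLp (Fin d)).measure_preimage
    (MeasurableSet.univ_pi fun _ => measurableSet_Ico).nullMeasurableSet, Real.volume_pi_Ico]
  simp

lemma measurableSet_unitCube (d : ℕ) : MeasurableSet (unitCube d) := by
  have : unitCube d = (WithLp.ofLp) ⁻¹' (Set.pi Set.univ fun _ : Fin d => Set.Ico (0 : ℝ) 1) := by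
    ext x; simp [unitCube]
  rw [this]
  exact (PiLp.volume_preserving_ofLp (Fin d)).measurable
    (MeasurableSet.univ_pi fun _ => measurableSet_Ico)

lemma lqNorm_cube_le (d : ℕ) (p : ℝ≥0∞) (hp : 1 ≤ p) (f : EuclideanSpace ℝ (Fin d) → ℝ≥0∞)
    (B : ℝ≥0∞) (hf : ∀ x ∈ unitCube d, f x ≤ B) :
    lqNorm (volume.restrict (unitCube d)) p f ≤ B := by
  unfold lqNorm
  split_ifs with h
  · refine essSup_le_of_ae_le B ?_
    exact (ae_restrict_iff' (measurableSet_unitCube d)).2 (Filter.Eventually.of_forall hf)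
  · have hp0 : 0 < p.toReal := ENNReal.toReal_pos (by rintro rfl; simp at hp) h
    calc _ ≤ (∫⁻ a in unitCube d, B ^ p.toReal) ^ (1 / p.toReal) := by
          gcongr ?_ ^ _
          exact setLIntegral_mono' (measurableSet_unitCube d) fun x hx => by
            gcongr; exact hf x hx
      _ ≤ (B ^ p.toReal) ^ (1 / p.toReal) := by
          gcongr
          rw [setLIntegral_const]
          exact mul_le_of_le_one_right' (volume_unitCube_le d)
      _ = B := by rw [one_div, ENNReal.rpow_rpow_inv hp0.ne']
/-- `‖ĥ_λ‖_{W(L^p,L^q)} ≲ λ^{d/q - d/2}`. -/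
theorem chirp_fourier_amalgam_bound (d : ℕ) (h : EuclideanSpace ℝ (Fin d) → ℂ)
    (hsm : ContDiff ℝ (⊤ : ℕ∞) h) (hsupp : HasCompactSupport h)
    (p q : ℝ≥0∞) (hp : 1 ≤ p) (hq : 1 ≤ q) :
    ∃ c : ℝ, 0 < c ∧
      ∀ lam : ℝ, 1 ≤ lam →
        wNorm d p q
            (fTrans fun x => h x * Complex.exp (Complex.I * (-(Real.pi * lam * ‖x‖ ^ 2)))) ≤
          ENNReal.ofReal (c * lam ^ ((d : ℝ) * invR q - d / 2)) := by
  obtain ⟨C, hC, hb⟩ := pointwise_bound d h hsm hsupp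
  have hinv0 : 0 ≤ invR q := ENNReal.toReal_nonneg
  refine ⟨(C + 1) * 4 ^ d * 3 ^ ((d : ℝ) * invR q), by positivity, fun lam hl => ?_⟩
  have hl0 : 0 < lam := by linarith
  let w : ℤ → ℝ := fun k => ((1 + lam⁻¹ * |(k : ℝ)|) ^ 2)⁻¹
  have hw0 : ∀ k, 0 ≤ w k := fun k => by positivity
  have hw1 : ∀ k, w k ≤ 1 := fun k => by
    refine inv_le_one_of_one_le₀ (one_le_pow₀ ?_)
    have : 0 ≤ lam⁻¹ * |(k : ℝ)| := by positivity
    linarith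
  let W : (Fin d → ℤ) → ℝ≥0∞ := fun n => ∏ i, ENNReal.ofReal (w (n i))
  have hW1 : ∀ n, W n ≤ 1 := fun n =>
    Finset.prod_le_one' fun i _ => ENNReal.ofReal_le_one.2 (hw1 _)
  let A : ℝ≥0∞ := ENNReal.ofReal ((C + 1) * 4 ^ d * lam ^ (-(d / 2 : ℝ)))
  have hinner : ∀ n : Fin d → ℤ, lqNorm (volume.restrict (unitCube d)) p (fun x =>
      (‖fTrans (fun x => h x * Complex.exp (Complex.I * (-(Real.pi * lam * ‖x‖ ^ 2))))
        (x + show EuclideanSpace ℝ (Fin d) from WithLp.toLp 2 fun i => (n i : ℝ))‖₊ : ℝ≥0∞))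
      ≤ A * W n := by
    intro n
    refine lqNorm_cube_le d p hp _ _ fun x hx => ?_
    have h1 := (hb lam hl (x + WithLp.toLp 2 fun i => (n i : ℝ))).trans
      (mul_le_mul_of_nonneg_left (weight_bound d lam hl x hx n) (by positivity))
    rw [← enorm_eq_nnnorm]
    have hWn : W n = ENNReal.ofReal (∏ i, w (n i)) :=
      (ENNReal.ofReal_prod_of_nonneg (fun i _ => hw0 _)).symm
    rw [← ofReal_norm, hWn, ← ENNReal.ofReal_mul (by positivity)]
    refine ENNReal.ofReal_le_ofReal (h1.trans ?_)
    have hP : 0 ≤ ∏ i, w (n i) := Finset.prod_nonneg fun i _ => hw0 _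
    calc _ = C * (4 ^ d * lam ^ (-(d / 2 : ℝ)) * ∏ i, w (n i)) := by
          simp only [w]; ring
      _ ≤ (C + 1) * (4 ^ d * lam ^ (-(d / 2 : ℝ)) * ∏ i, w (n i)) := by
          gcongr; linarith
      _ = _ := by ring
  unfold wNorm
  by_cases hqt : q = ∞
  · subst hqt
    have : invR ∞ = 0 := by simp [invR]
    rw [this, lqNorm, if_pos rfl]
    refine essSup_le_of_ae_le _ (Filter.Eventually.of_forall fun n => ?_)
    refine (hinner n).trans ((mul_le_of_le_one_right' (hW1 n)).trans (le_of_eq ?_))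
    simp only [A]
    congr 1
    simp
  · have hq0 : 0 < q.toReal := ENNReal.toReal_pos (by rintro rfl; simp at hq) hqt
    have hq1 : 1 ≤ q.toReal := by
      rw [← ENNReal.toReal_one]; exact ENNReal.toReal_mono hqt hq
    rw [lqNorm, if_neg hqt, lintegral_count]
    have hinv : invR q = 1 / q.toReal := by simp [invR]
    have hsum : ∑' n, W n ≤ ENNReal.ofReal (3 * lam) ^ d :=
      (tsum_pi_bound d fun k => ENNReal.ofReal (w k)).trans
        (pow_le_pow_left' (tsum_int_bound lam hl) d)
    calc _ ≤ (∑' n, A ^ q.toReal * W n) ^ (1 / q.toReal) := by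
          gcongr with n
          calc _ ≤ (A * W n) ^ q.toReal := by gcongr; exact hinner n
            _ = A ^ q.toReal * W n ^ q.toReal := ENNReal.mul_rpow_of_nonneg _ _ hq0.le
            _ ≤ A ^ q.toReal * W n := by
              gcongr
              exact ENNReal.rpow_le_self_of_le_one (hW1 n) hq1
      _ ≤ (A ^ q.toReal * ENNReal.ofReal (3 * lam) ^ d) ^ (1 / q.toReal) := by
          rw [ENNReal.tsum_mul_left]
          gcongr
      _ = A * ENNReal.ofReal (3 * lam) ^ ((d : ℝ) * invR q) := by
          rw [ENNReal.mul_rpow_of_nonneg _ _ (by positivity), one_div,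
            ENNReal.rpow_rpow_inv hq0.ne', ← ENNReal.rpow_natCast, ← ENNReal.rpow_mul, hinv, one_div]
      _ = _ := by
          rw [ENNReal.ofReal_rpow_of_pos (by positivity), ← ENNReal.ofReal_mul (by positivity)]
          congr 1
          rw [Real.mul_rpow (by norm_num) hl0.le, sub_eq_add_neg, Real.rpow_add hl0]
          ring
end
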